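/- arXiv:2107.08830 — 2 statements merged into one kernel-verified Lean document; each statement's English description precedes it below -/
import Mathlib

section
/- Let m ≥ 1, let K be an invertible m × m complex matrix, let λ₁, …, λ_m ∈ ℂ satisfy Re λ_l < 0 for every l, and let 0 < β₀ < 1. Then there exists T₀ > 1 such that for every t₀ ≥ T₀ the following holds: if d ∈ ℂ^m is such that for every l the l-th component b_l of the vector K⁻¹·d lies in the image of [β₀, 1) under ρ ↦ E_ρ(λ_l·t₀^ρ), then there exists a unique vector B = (β₁*, …, β_m*) with β_l* ∈ [β₀, 1] for every l such that ∑_{l=1}^m K_{j,l} · E_{β_l*}(λ_l·t₀^{β_l*}) = d_j for every j = 1, …, m. -/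
/-- The (one-parameter) Mittag-Leffler function `E_β(z) = ∑ₖ zᵏ / Γ(βk + 1)`. -/
noncomputable def mittagLeffler (β : ℝ) (z : ℂ) : ℂ :=
  ∑' k : ℕ, z ^ k / Complex.Gamma (β * k + 1)

/-!
Hankel's formula writes `2πi / Γ(z)` as the integral of `e^s s^{-z} ds` along a contour around the
negative axis; both sides are entire in `z`, so it suffices to check it for `re z < 1`, where the
contour collapses onto the axis and leaves the integral for `Γ(1 - z)`. In the variable `ζ = log s`
the contour becomes a pair of horizontal lines `im ζ = ±θ` joined by a vertical segment, and summing
a geometric series under the integral represents `2πi E_ρ(μ)` in the same way.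

If `re λ < 0`, then `e^η` stays away from `λ` on some strip `|im η| ≤ θ` with `θ > π / 2`. The
vertical segment can then be pushed to `-∞`, and the expansion `-λ w / (w - λ) = w - w² / (w - λ)`
gives `-λ E_ρ(λ t^ρ) = t^{-ρ} / Γ(1 - ρ) + R_ρ(t)`. On `[β, 1]` the leading term decreases between
`ρ < σ` by at least a constant times `t^{-ρ} (σ - ρ)`, because `1 / Γ(1 - ρ)` itself decreases at a
positive rate (log-convexity of `Γ`), whereas `R` varies by `O((1 + log t) t^{-2ρ} (σ - ρ))`. For
large `t` the leading term wins, so `ρ ↦ E_ρ(λ t^ρ)` is injective on `[β, 1]`; inverting `K` reduces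
the system to its components.
-/

namespace CaputoInverse

open Real Set Filter Topology MeasureTheory
open Complex (I)

section DoubleExponential

lemma integral_comp_exp {E : Type*} [NormedAddCommGroup E] [NormedSpace ℝ E] (f : ℝ → E) :
    ∫ x, exp x • f (exp x) = ∫ r in Ioi 0, f r := by
  rw [← range_exp, ← image_univ, integral_image_eq_integral_abs_deriv_smul MeasurableSet.univ
    (fun x _ => (hasDerivAt_exp x).hasDerivWithinAt) exp_injective.injOn, setIntegral_univ]
  simp only [abs_exp]

lemma integrable_comp_exp_iff {E : Type*} [NormedAddCommGroup E] [NormedSpace ℝ E] (f : ℝ → E) :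
    Integrable (fun x => exp x • f (exp x)) ↔ IntegrableOn f (Ioi 0) := by
  rw [← range_exp, ← image_univ, integrableOn_image_iff_integrableOn_abs_deriv_smul
    MeasurableSet.univ (fun x _ => (hasDerivAt_exp x).hasDerivWithinAt) exp_injective.injOn,
    integrableOn_univ]
  simp only [abs_exp]

variable {a δ : ℝ}

lemma integrable_exp_mul_sub_mul_exp (ha : 0 < a) (hδ : 0 < δ) :
    Integrable fun x => exp (a * x - δ * exp x) := by
  have hgamma : IntegrableOn (fun r : ℝ => r ^ (a - 1) * exp (-δ * r ^ (1 : ℝ))) (Ioi 0) :=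
    integrableOn_rpow_mul_exp_neg_mul_rpow (by linarith) one_pos hδ
  refine ((integrable_comp_exp_iff _).2 hgamma).congr (Eventually.of_forall fun x => ?_)
  simp only [smul_eq_mul, rpow_one]
  rw [← exp_mul, ← exp_add, ← exp_add]
  ring_nf

lemma integrableOn_Ioi_exp_mul_sub_mul_exp (a A : ℝ) (hδ : 0 < δ) :
    IntegrableOn (fun x => exp (a * x - δ * exp x)) (Ioi A) := by
  have hpos : Integrable fun x => exp ((|a| + 1) * x - δ * exp x) :=
    integrable_exp_mul_sub_mul_exp (by positivity) hδ
  refine (hpos.integrableOn.const_mul (exp ((a - (|a| + 1)) * A))).mono' (by fun_prop) ?_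
  filter_upwards [ae_restrict_mem measurableSet_Ioi] with x (hx : A < x)
  rw [norm_of_nonneg (exp_pos _).le, ← exp_add, exp_le_exp]
  nlinarith [le_abs_self a]

lemma integrable_abs_add_mul_exp_mul_sub_mul_exp (ha : 0 < a) (hδ : 0 < δ) (C : ℝ) :
    Integrable fun x => (|x| + C) * exp (a * x - δ * exp x) := by
  have hdom : Integrable fun x =>
      2 / a * (exp (3 * a / 2 * x - δ * exp x) + exp (a / 2 * x - δ * exp x)) :=
    ((integrable_exp_mul_sub_mul_exp (by linarith) hδ).add
      (integrable_exp_mul_sub_mul_exp (by linarith) hδ)).const_mul _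
  have habs : Integrable fun x => |x| * exp (a * x - δ * exp x) := by
    refine hdom.mono' (by fun_prop) (Eventually.of_forall fun x => ?_)
    have hx : |x| ≤ 2 / a * (exp (a / 2 * x) + exp (-(a / 2 * x))) := by
      rw [div_mul_eq_mul_div, le_div_iff₀ ha]
      have hexp : |a / 2 * x| ≤ exp (a / 2 * x) + exp (-(a / 2 * x)) :=
        (by linarith [add_one_le_exp |a / 2 * x|] : _ ≤ exp |a / 2 * x|).trans (exp_abs_le _)
      rw [abs_mul, abs_of_pos (half_pos ha)] at hexp
      linarith
    calc ‖|x| * exp (a * x - δ * exp x)‖ = |x| * exp (a * x - δ * exp x) :=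
          norm_of_nonneg (by positivity)
      _ ≤ 2 / a * (exp (a / 2 * x) + exp (-(a / 2 * x))) * exp (a * x - δ * exp x) := by gcongr
      _ = _ := by
          rw [mul_assoc, add_mul, ← exp_add, ← exp_add]
          ring_nf
  exact (habs.add ((integrable_exp_mul_sub_mul_exp ha hδ).const_mul C)).congr
    (Eventually.of_forall fun x => (add_mul _ _ _).symm)

lemma tendsto_exp_mul_sub_mul_exp_atTop (a : ℝ) (hδ : 0 < δ) :
    Tendsto (fun x => exp (a * x - δ * exp x)) atTop (𝓝 0) := by
  refine ((tendsto_rpow_mul_exp_neg_mul_atTop_nhds_zero a δ hδ).comp tendsto_exp_atTop).congr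
    fun x => ?_
  rw [Function.comp_apply, ← exp_mul, ← exp_add]
  ring_nf

lemma tendsto_exp_mul_atBot (ha : 0 < a) : Tendsto (fun x => exp (a * x)) atBot (𝓝 0) :=
  tendsto_exp_atBot.comp (tendsto_id.const_mul_atBot ha)

lemma tendsto_exp_mul_sub_mul_exp_atBot (ha : 0 < a) (hδ : 0 < δ) :
    Tendsto (fun x => exp (a * x - δ * exp x)) atBot (𝓝 0) := by
  refine squeeze_zero (fun x => (exp_pos _).le) (fun x => ?_) (tendsto_exp_mul_atBot ha)
  rw [exp_le_exp]
  linarith [mul_pos hδ (exp_pos x)]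

end DoubleExponential

section Contours

/-- The integral of `F` along the U-shaped contour that comes in from `∞ - iθ`, turns at real part
`A` and leaves to `∞ + iθ`. Under `s = exp ζ` it is Hankel's contour around the negative axis. -/
noncomputable def hankelIntegral (A θ : ℝ) (F : ℂ → ℂ) : ℂ :=
  (∫ x in Ioi A, F (x + θ * I)) - (∫ x in Ioi A, F (x + (-θ : ℝ) * I))
    + I * ∫ y in (-θ)..θ, F (A + y * I)

/-- The limiting case `A → -∞` of `hankelIntegral`: the integral of `F` along the line `im ζ = θ`
minus the one along `im ζ = -θ`. -/
noncomputable def hankelLineIntegral (θ : ℝ) (F : ℂ → ℂ) : ℂ :=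
  (∫ x : ℝ, F (x + θ * I)) - ∫ x : ℝ, F (x + (-θ : ℝ) * I)

lemma hankelIntegral_const_mul (A θ : ℝ) (c : ℂ) (F : ℂ → ℂ) :
    hankelIntegral A θ (fun ζ => c * F ζ) = c * hankelIntegral A θ F := by
  simp only [hankelIntegral, integral_const_mul, intervalIntegral.integral_const_mul]
  ring

variable {F : ℂ → ℂ} {g : ℝ → ℝ}

lemma tendsto_integral_vertical_segment {l : Filter ℝ} {y₁ y₂ : ℝ}
    (hFg : ∀ᶠ x : ℝ in l, ∀ y ∈ uIcc y₁ y₂, ‖F (x + y * I)‖ ≤ g x) (hg : Tendsto g l (𝓝 0)) :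
    Tendsto (fun x : ℝ => I * ∫ y in y₁..y₂, F (x + y * I)) l (𝓝 0) := by
  refine squeeze_zero_norm' ?_ (by simpa using hg.mul_const |y₂ - y₁|)
  filter_upwards [hFg] with x hx
  rw [norm_mul, Complex.norm_I, one_mul]
  exact intervalIntegral.norm_integral_le_of_norm_le_const fun y hy => hx y (uIoc_subset_uIcc hy)

lemma integral_horizontal_line_eq {y₁ y₂ : ℝ} (hF : Differentiable ℂ F)
    (hFg : ∀ x : ℝ, ∀ y ∈ uIcc y₁ y₂, ‖F (x + y * I)‖ ≤ g x) (hgi : Integrable g)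
    (hgTop : Tendsto g atTop (𝓝 0)) (hgBot : Tendsto g atBot (𝓝 0)) :
    ∫ x : ℝ, F (x + y₁ * I) = ∫ x : ℝ, F (x + y₂ * I) := by
  have hline : ∀ y ∈ uIcc y₁ y₂, Tendsto (fun T : ℝ => ∫ x in (-T)..T, F (x + y * I)) atTop
      (𝓝 (∫ x : ℝ, F (x + y * I))) := fun y hy =>
    intervalIntegral_tendsto_integral
      (hgi.mono' (hF.continuous.comp (by fun_prop)).aestronglyMeasurable
        (Eventually.of_forall fun x => hFg x y hy))
      tendsto_neg_atTop_atBot tendsto_id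
  have hright := tendsto_integral_vertical_segment (Eventually.of_forall hFg) hgTop
  have hleft := (tendsto_integral_vertical_segment (Eventually.of_forall hFg) hgBot).comp
    tendsto_neg_atTop_atBot
  have hcauchy : ∀ T : ℝ, (∫ x in (-T)..T, F (x + y₁ * I)) - (∫ x in (-T)..T, F (x + y₂ * I))
      + I * (∫ y in y₁..y₂, F (T + y * I)) - I * (∫ y in y₁..y₂, F ((-T : ℝ) + y * I)) = 0 :=
    fun T => by
      simpa using Complex.integral_boundary_rect_eq_zero_of_differentiableOn F
        ((-T : ℝ) + y₁ * I) (T + y₂ * I) hF.differentiableOn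
  have hlim := (((hline y₁ left_mem_uIcc).sub (hline y₂ right_mem_uIcc)).add hright).sub hleft
  simpa [sub_eq_zero] using
    tendsto_nhds_unique (hlim.congr hcauchy) tendsto_const_nhds

lemma hankelIntegral_eq_hankelLineIntegral {A θ : ℝ} (hθ : 0 ≤ θ)
    (hF : ∀ ζ : ℂ, |ζ.im| ≤ θ → DifferentiableAt ℂ F ζ)
    (hFg : ∀ x ≤ A, ∀ y : ℝ, |y| ≤ θ → ‖F (x + y * I)‖ ≤ g x) (hg : Tendsto g atBot (𝓝 0))
    (hpos : Integrable fun x : ℝ => F (x + θ * I))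
    (hneg : Integrable fun x : ℝ => F (x + (-θ : ℝ) * I)) :
    hankelIntegral A θ F = hankelLineIntegral θ F := by
  have hstrip : ∀ y ∈ uIcc (-θ) θ, |y| ≤ θ := fun y hy => by
    rwa [uIcc_of_le (by linarith), mem_Icc, ← abs_le] at hy
  have hleft : Tendsto (fun B : ℝ => I * ∫ y in (-θ)..θ, F (B + y * I)) atBot (𝓝 0) := by
    refine tendsto_integral_vertical_segment ?_ hg
    filter_upwards [Iic_mem_atBot A] with B hB y hy
    exact hFg B hB y (hstrip y hy)
  have hcauchy : ∀ B : ℝ, (∫ x in B..A, F (x + (-θ : ℝ) * I)) - (∫ x in B..A, F (x + θ * I))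
      + I * (∫ y in (-θ)..θ, F (A + y * I)) - I * (∫ y in (-θ)..θ, F (B + y * I)) = 0 := by
    intro B
    have hdiff : DifferentiableOn ℂ F (uIcc B A ×ℂ uIcc (-θ) θ) := fun ζ hζ =>
      (hF ζ (hstrip _ hζ.2)).differentiableWithinAt
    simpa using Complex.integral_boundary_rect_eq_zero_of_differentiableOn F
      (B + (-θ : ℝ) * I) (A + θ * I) (by simpa using hdiff)
  have hlim := (((intervalIntegral_tendsto_integral_Iic A hneg.integrableOn tendsto_id).sub
    (intervalIntegral_tendsto_integral_Iic A hpos.integrableOn tendsto_id)).add_const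
      (I * ∫ y in (-θ)..θ, F (A + y * I))).sub hleft
  have hzero := tendsto_nhds_unique (hlim.congr hcauchy) tendsto_const_nhds
  rw [hankelIntegral, hankelLineIntegral,
    ← intervalIntegral.integral_Iic_add_Ioi (b := A) hpos.integrableOn hpos.integrableOn,
    ← intervalIntegral.integral_Iic_add_Ioi (b := A) hneg.integrableOn hneg.integrableOn]
  linear_combination hzero

lemma hasSum_hankelIntegral {A θ : ℝ} {f : ℕ → ℂ → ℂ} {a : ℕ → ℝ} {b : ℂ → ℝ}
    (hf : ∀ k, Continuous (f k)) (ha : Summable a) (hb : Continuous b)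
    (hpos : IntegrableOn (fun x : ℝ => b (x + θ * I)) (Ioi A))
    (hneg : IntegrableOn (fun x : ℝ => b (x + (-θ : ℝ) * I)) (Ioi A))
    (hfab : ∀ k (ζ : ℂ), A ≤ ζ.re → ‖f k ζ‖ ≤ a k * b ζ)
    (hsum : ∀ ζ : ℂ, A ≤ ζ.re → HasSum (f · ζ) (F ζ)) :
    HasSum (fun k => hankelIntegral A θ (f k)) (hankelIntegral A θ F) := by
  have hray : ∀ y : ℝ, IntegrableOn (fun x : ℝ => b (x + y * I)) (Ioi A) →
      HasSum (fun k => ∫ x in Ioi A, f k (x + y * I)) (∫ x in Ioi A, F (x + y * I)) := by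
    intro y hy
    refine hasSum_integral_of_dominated_convergence (fun k x => a k * b (x + y * I))
      (fun k => ((hf k).comp (by fun_prop)).aestronglyMeasurable) (fun k => ?_)
      (Eventually.of_forall fun x => ha.mul_right _) ?_ ?_
    · filter_upwards [ae_restrict_mem measurableSet_Ioi] with x hx
      exact hfab k _ (by simpa using le_of_lt hx)
    · simpa only [tsum_mul_right] using hy.const_mul _
    · filter_upwards [ae_restrict_mem measurableSet_Ioi] with x hx
      exact hsum _ (by simpa using le_of_lt hx)
  have harc : HasSum (fun k => ∫ y in (-θ)..θ, f k (A + y * I))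
      (∫ y in (-θ)..θ, F (A + y * I)) := by
    refine intervalIntegral.hasSum_integral_of_dominated_convergence
      (fun k y => a k * b (A + y * I))
      (fun k => ((hf k).comp (by fun_prop)).aestronglyMeasurable)
      (fun k => Eventually.of_forall fun y _ => hfab k _ (by simp))
      (Eventually.of_forall fun y _ => ha.mul_right _) ?_
      (Eventually.of_forall fun y _ => hsum _ (by simp))
    simp only [tsum_mul_right]
    exact Continuous.intervalIntegrable (by fun_prop) _ _
  exact ((hray θ hpos).sub (hray (-θ) hneg)).add (harc.mul_left I)

end Contours

section HankelFormula

lemma differentiable_integral_mul_cexp {α : Type*} [MeasurableSpace α] {μ : Measure α}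
    {f g : α → ℂ} (hf : AEStronglyMeasurable f μ) (hg : AEStronglyMeasurable g μ)
    (hinteg : ∀ c ≥ 0, Integrable (fun x => ‖g x‖ * exp (c * ‖f x‖)) μ) :
    Differentiable ℂ fun z => ∫ x, g x * Complex.exp (z * f x) ∂μ := by
  intro z₀
  have hmeas : ∀ z : ℂ, AEStronglyMeasurable (fun x => g x * Complex.exp (z * f x)) μ := fun z =>
    hg.mul (Complex.continuous_exp.comp_aestronglyMeasurable (hf.const_mul z))
  have hre : ∀ (z : ℂ) x, ‖Complex.exp (z * f x)‖ ≤ exp (‖z‖ * ‖f x‖) := fun z x =>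
    (Complex.norm_exp_le_exp_norm _).trans_eq (by rw [norm_mul])
  have hinteg₀ : Integrable (fun x => g x * Complex.exp (z₀ * f x)) μ := by
    refine (hinteg ‖z₀‖ (norm_nonneg _)).mono' (hmeas z₀) (Eventually.of_forall fun x => ?_)
    rw [norm_mul]
    gcongr
    exact hre z₀ x
  refine (hasDerivAt_integral_of_dominated_loc_of_deriv_le
    (F' := fun z x => g x * (Complex.exp (z * f x) * f x))
    (Metric.ball_mem_nhds z₀ one_pos) (Eventually.of_forall hmeas) hinteg₀ ?_ ?_
    (hinteg (‖z₀‖ + 2) (by positivity)) ?_).2.differentiableAt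
  · exact hg.mul ((Complex.continuous_exp.comp_aestronglyMeasurable (hf.const_mul z₀)).mul hf)
  · refine Eventually.of_forall fun x z hz => ?_
    have hz' : ‖z‖ ≤ ‖z₀‖ + 1 := by
      linarith [norm_le_norm_add_norm_sub' z z₀, mem_ball_iff_norm.1 hz]
    have hfx : ‖f x‖ ≤ exp ‖f x‖ := by linarith [add_one_le_exp ‖f x‖]
    calc ‖g x * (Complex.exp (z * f x) * f x)‖
        ≤ ‖g x‖ * (exp ((‖z₀‖ + 1) * ‖f x‖) * exp ‖f x‖) := by
          rw [norm_mul, norm_mul]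
          gcongr
          exact (hre z x).trans (by gcongr)
      _ = ‖g x‖ * exp ((‖z₀‖ + 2) * ‖f x‖) := by
          rw [← exp_add]
          ring_nf
  · refine Eventually.of_forall fun x z _ => ?_
    simpa using (((hasDerivAt_id z).mul_const (f x)).cexp).const_mul (g x)

/-- The integrand `e^s s^{-z} ds` of Hankel's formula for `1 / Γ`, in the variable `ζ = log s`. -/
noncomputable def hankelIntegrand (z ζ : ℂ) : ℂ :=
  Complex.exp (Complex.exp ζ + (1 - z) * ζ)

lemma differentiable_hankelIntegrand (z : ℂ) : Differentiable ℂ (hankelIntegrand z) := by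
  unfold hankelIntegrand
  fun_prop

lemma norm_hankelIntegrand (z : ℂ) (x y : ℝ) :
    ‖hankelIntegrand z (x + y * I)‖ =
      exp (z.im * y) * exp ((1 - z.re) * x - -cos y * exp x) := by
  rw [hankelIntegrand, Complex.norm_exp, ← exp_add]
  congr 1
  simp only [Complex.add_re, Complex.exp_re, Complex.mul_re, Complex.sub_re, Complex.add_im,
    Complex.mul_im, Complex.sub_im, Complex.ofReal_re, Complex.ofReal_im, Complex.one_re,
    Complex.one_im, Complex.I_re, Complex.I_im]
  ring_nf

lemma norm_hankelIntegrand_le {z : ℂ} {x y δ C : ℝ} (hy : cos y ≤ -δ) (hC : |y| ≤ C) :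
    ‖hankelIntegrand z (x + y * I)‖ ≤
      exp (|z.im| * C) * exp ((1 - z.re) * x - δ * exp x) := by
  rw [norm_hankelIntegrand]
  have him : z.im * y ≤ |z.im| * C :=
    (le_abs_self _).trans ((abs_mul _ _).trans_le (by gcongr))
  gcongr
  linarith

variable {z : ℂ} {y θ : ℝ}

lemma integrable_hankelIntegrand (hz : z.re < 1) (hy : cos y < 0) :
    Integrable fun x : ℝ => hankelIntegrand z (x + y * I) :=
  ((integrable_exp_mul_sub_mul_exp (sub_pos.2 hz) (neg_pos.2 hy)).const_mul _).mono'
    ((differentiable_hankelIntegrand z).continuous.comp (by fun_prop)).aestronglyMeasurable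
    (Eventually.of_forall fun x => (norm_hankelIntegrand z x y).le)

lemma integrableOn_Ioi_norm_hankelIntegrand (z : ℂ) (A : ℝ) (hy : cos y < 0) :
    IntegrableOn (fun x : ℝ => ‖hankelIntegrand z (x + y * I)‖) (Ioi A) := by
  simp only [norm_hankelIntegrand]
  exact (integrableOn_Ioi_exp_mul_sub_mul_exp _ A (neg_pos.2 hy)).const_mul _

lemma integral_hankelIntegrand_of_cexp_eq_neg_one (hz : z.re < 1)
    (hy : Complex.exp (y * I) = -1) :
    ∫ x : ℝ, hankelIntegrand z (x + y * I) =
      Complex.exp ((1 - z) * (y * I)) * Complex.Gamma (1 - z) := by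
  rw [Complex.Gamma_eq_integral (by simpa using hz), Complex.GammaIntegral, ← integral_comp_exp,
    ← integral_const_mul]
  refine integral_congr_ae (Eventually.of_forall fun x => ?_)
  dsimp only
  rw [hankelIntegrand, Complex.exp_add x, hy, Complex.real_smul,
    Complex.cpow_def_of_ne_zero (Complex.ofReal_ne_zero.2 (exp_ne_zero x)),
    ← Complex.ofReal_log (exp_pos x).le, log_exp, Complex.ofReal_exp, Complex.ofReal_exp,
    ← Complex.exp_add, ← Complex.exp_add, ← Complex.exp_add]
  push_cast
  ring_nf

lemma integral_hankelIntegrand_shift {y₀ : ℝ} (hz : z.re < 1) (hy₀ : cos y₀ = -1)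
    (hy : |y₀ - y| < π / 2) :
    ∫ x : ℝ, hankelIntegrand z (x + y * I) = ∫ x : ℝ, hankelIntegrand z (x + y₀ * I) := by
  have hδ : 0 < cos |y₀ - y| := cos_pos_of_mem_Ioo ⟨by linarith [abs_nonneg (y₀ - y)], hy⟩
  have hsin : sin y₀ = 0 := by nlinarith [sin_sq_add_cos_sq y₀]
  have ha : 0 < 1 - z.re := sub_pos.2 hz
  refine integral_horizontal_line_eq (differentiable_hankelIntegrand z)
    (g := fun x => exp (|z.im| * max |y| |y₀|) *
      exp ((1 - z.re) * x - cos |y₀ - y| * exp x)) (fun x y' hy' => ?_)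
    ((integrable_exp_mul_sub_mul_exp ha hδ).const_mul _)
    (by simpa using (tendsto_exp_mul_sub_mul_exp_atTop _ hδ).const_mul _)
    (by simpa using (tendsto_exp_mul_sub_mul_exp_atBot ha hδ).const_mul _)
  have hdist : |y₀ - y'| ≤ |y₀ - y| := abs_sub_right_of_mem_uIcc hy'
  have hcos : cos y' = -cos |y₀ - y'| := by
    rw [cos_abs, cos_sub, hy₀, hsin]
    ring
  refine norm_hankelIntegrand_le ?_ ?_
  · rw [hcos, neg_le_neg_iff]
    exact cos_le_cos_of_nonneg_of_le_pi (abs_nonneg _) (by linarith [pi_pos]) hdist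
  · rcases mem_uIcc.1 hy' with h | h
    · exact abs_le_max_abs_abs h.1 h.2
    · exact (abs_le_max_abs_abs h.1 h.2).trans_eq (max_comm _ _)

lemma sin_pi_mul_mul_Gamma_one_sub (hz : z.re < 1) :
    Complex.sin (π * z) * Complex.Gamma (1 - z) = π / Complex.Gamma z := by
  have hΓ : Complex.Gamma (1 - z) ≠ 0 := Complex.Gamma_ne_zero_of_re_pos (by simpa using hz)
  have hreflection := Complex.Gamma_mul_Gamma_one_sub z
  rcases eq_or_ne (Complex.sin (π * z)) 0 with hsin | hsin
  · have hzero : Complex.Gamma z = 0 := by simpa [hsin, hΓ] using hreflection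
    rw [hsin, hzero, zero_mul, div_zero]
  · have hprod : Complex.Gamma z * Complex.Gamma (1 - z) ≠ 0 := by
      rw [hreflection]
      exact div_ne_zero (Complex.ofReal_ne_zero.2 pi_ne_zero) hsin
    rw [eq_div_iff (left_ne_zero_of_mul hprod), mul_assoc, mul_comm (Complex.Gamma (1 - z)),
      hreflection, mul_div_cancel₀ _ hsin]

lemma hankelLineIntegral_hankelIntegrand (hz : z.re < 1) (hθ : θ ∈ Ioo (π / 2) (3 * π / 2)) :
    hankelLineIntegral θ (hankelIntegrand z) = 2 * π * I / Complex.Gamma z := by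
  have hdist : |π - θ| < π / 2 := abs_lt.2 ⟨by linarith [hθ.2], by linarith [hθ.1]⟩
  have hdist' : |-π - -θ| < π / 2 := by rwa [neg_sub_neg, abs_sub_comm]
  have hexp : Complex.exp ((-π : ℝ) * I) = -1 := by
    rw [Complex.ofReal_neg, neg_mul, Complex.exp_neg, Complex.exp_pi_mul_I, inv_neg_one]
  have hsin : Complex.exp ((1 - z) * (π * I)) - Complex.exp ((1 - z) * ((-π : ℝ) * I)) =
      2 * I * Complex.sin (π * z) := by
    rw [← Complex.sin_pi_sub, Complex.sin, Complex.ofReal_neg,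
      show (1 - z) * (π * I) = (π - π * z) * I by ring,
      show (1 - z) * (-π * I) = -(π - π * z) * I by ring]
    linear_combination
      (Complex.exp ((π - π * z) * I) - Complex.exp (-(π - π * z) * I)) * Complex.I_sq
  rw [hankelLineIntegral, integral_hankelIntegrand_shift hz cos_pi hdist,
    integral_hankelIntegrand_shift hz (by rw [cos_neg, cos_pi]) hdist',
    integral_hankelIntegrand_of_cexp_eq_neg_one hz Complex.exp_pi_mul_I,
    integral_hankelIntegrand_of_cexp_eq_neg_one hz hexp, ← sub_mul, hsin, mul_assoc,
    sin_pi_mul_mul_Gamma_one_sub hz]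
  ring

lemma cos_neg_of_mem_Ioo (hθ : θ ∈ Ioo (π / 2) (3 * π / 2)) : cos θ < 0 :=
  cos_neg_of_pi_div_two_lt_of_lt hθ.1 (by linarith [hθ.2])

lemma hankelIntegral_hankelIntegrand_of_re_lt_one (hz : z.re < 1) (A : ℝ)
    (hθ : θ ∈ Ioo (π / 2) (3 * π / 2)) :
    hankelIntegral A θ (hankelIntegrand z) = 2 * π * I / Complex.Gamma z := by
  have hcos : cos θ < 0 := cos_neg_of_mem_Ioo hθ
  rw [← hankelLineIntegral_hankelIntegrand hz hθ]
  refine hankelIntegral_eq_hankelLineIntegral (by linarith [hθ.1, pi_pos])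
    (fun ζ _ => differentiable_hankelIntegrand z ζ)
    (g := fun x => exp (|z.im| * θ + exp A) * exp ((1 - z.re) * x))
    (fun x hx y hy => (norm_hankelIntegrand_le (δ := -1) (by simpa using cos_le_one y) hy).trans ?_)
    (by simpa using (tendsto_exp_mul_atBot (sub_pos.2 hz)).const_mul _)
    (integrable_hankelIntegrand hz hcos)
    (integrable_hankelIntegrand hz (by rwa [cos_neg]))
  rw [← exp_add, ← exp_add, exp_le_exp]
  linarith [exp_le_exp.2 hx]

lemma hankelIntegrand_eq_mul_cexp (z ζ : ℂ) :
    hankelIntegrand z ζ = hankelIntegrand 0 ζ * Complex.exp (z * -ζ) := by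
  rw [hankelIntegrand, hankelIntegrand, ← Complex.exp_add]
  ring_nf

lemma differentiable_integral_Ioi_hankelIntegrand (A : ℝ) (hy : cos y < 0) :
    Differentiable ℂ fun z => ∫ x : ℝ in Ioi A, hankelIntegrand z (x + y * I) := by
  rw [funext₂ hankelIntegrand_eq_mul_cexp]
  have hcont := (differentiable_hankelIntegrand 0).continuous
  refine differentiable_integral_mul_cexp (by fun_prop) (by fun_prop) fun c hc => ?_
  refine ((integrableOn_Ioi_norm_hankelIntegrand (-c : ℝ) A hy).const_mul
    (exp (c * (2 * |A| + |y|)))).mono' (by fun_prop) ?_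
  filter_upwards [ae_restrict_mem measurableSet_Ioi] with x (hx : A < x)
  have hnorm : ‖-(x + y * I : ℂ)‖ ≤ x + (2 * |A| + |y|) := by
    have hx' : |x| ≤ x + 2 * |A| := by
      rw [abs_le]
      constructor <;> linarith [neg_abs_le A, abs_nonneg A]
    rw [norm_neg]
    refine (norm_add_le _ _).trans ?_
    rw [norm_mul, Complex.norm_I, mul_one, Complex.norm_real, Complex.norm_real]
    simpa only [norm_eq_abs, add_assoc] using add_le_add_left hx' |y|
  rw [norm_of_nonneg (by positivity), norm_hankelIntegrand, norm_hankelIntegrand, ← exp_add,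
    ← exp_add, ← exp_add, ← exp_add, exp_le_exp]
  simp only [Complex.ofReal_re, Complex.ofReal_im, Complex.zero_re, Complex.zero_im]
  linarith [mul_le_mul_of_nonneg_left hnorm hc]

lemma differentiable_intervalIntegral_hankelIntegrand (A a b : ℝ) :
    Differentiable ℂ fun z => ∫ y : ℝ in a..b, hankelIntegrand z (A + y * I) := by
  rw [funext₂ hankelIntegrand_eq_mul_cexp]
  simp only [intervalIntegral.intervalIntegral_eq_integral_uIoc]
  have hcont := (differentiable_hankelIntegrand 0).continuous
  refine (differentiable_integral_mul_cexp (by fun_prop) (by fun_prop) fun c _ => ?_).const_smul _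
  exact Continuous.integrableOn_uIoc (by fun_prop)

theorem hankelIntegral_hankelIntegrand (z : ℂ) (A : ℝ) (hθ : θ ∈ Ioo (π / 2) (3 * π / 2)) :
    hankelIntegral A θ (hankelIntegrand z) = 2 * π * I / Complex.Gamma z := by
  have hcos : cos θ < 0 := cos_neg_of_mem_Ioo hθ
  have hleft : Differentiable ℂ fun z => hankelIntegral A θ (hankelIntegrand z) :=
    ((differentiable_integral_Ioi_hankelIntegrand A hcos).sub
      (differentiable_integral_Ioi_hankelIntegrand A (by rwa [cos_neg]))).add
      ((differentiable_intervalIntegral_hankelIntegrand A _ _).const_mul I)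
  have hright : Differentiable ℂ fun z => 2 * π * I / Complex.Gamma z :=
    Complex.differentiable_one_div_Gamma.const_mul _
  have heq : (fun z => hankelIntegral A θ (hankelIntegrand z)) =ᶠ[𝓝 0]
      fun z => 2 * π * I / Complex.Gamma z := by
    filter_upwards [(isOpen_lt Complex.continuous_re continuous_const).mem_nhds
      (show (0 : ℂ).re < 1 by simp)] with z hz
    exact hankelIntegral_hankelIntegrand_of_re_lt_one hz A hθ
  exact congrFun (AnalyticOnNhd.eq_of_eventuallyEq
    (Complex.analyticOnNhd_univ_iff_differentiable.2 hleft)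
    (Complex.analyticOnNhd_univ_iff_differentiable.2 hright) heq) z

end HankelFormula

section MittagLeffler

/-- The integrand of the Hankel-type representation of `2πi E_ρ(μ)`, in the variable
`ζ = log s`; it is `e^s s^{ρ-1} ds / (s^ρ - μ)`. -/
noncomputable def mittagLefflerIntegrand (ρ : ℝ) (μ ζ : ℂ) : ℂ :=
  hankelIntegrand (1 - ρ) ζ / (Complex.exp (ρ * ζ) - μ)

variable {ρ A θ : ℝ} {μ ζ : ℂ}

lemma pow_mul_hankelIntegrand (ρ : ℝ) (μ ζ : ℂ) (k : ℕ) :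
    μ ^ k * hankelIntegrand (ρ * k + 1) ζ =
      (μ * Complex.exp (-(ρ * ζ))) ^ k * hankelIntegrand 1 ζ := by
  rw [mul_pow, mul_assoc, ← Complex.exp_nat_mul, hankelIntegrand, hankelIntegrand,
    ← Complex.exp_add]
  ring_nf

lemma norm_mul_cexp_neg_le (hρ : 0 < ρ) (hζ : A ≤ ζ.re) :
    ‖μ * Complex.exp (-(ρ * ζ))‖ ≤ ‖μ‖ * exp (-(ρ * A)) := by
  rw [norm_mul, Complex.norm_exp, Complex.neg_re, Complex.re_ofReal_mul]
  gcongr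

lemma hasSum_pow_mul_hankelIntegrand (h : ‖μ * Complex.exp (-(ρ * ζ))‖ < 1) :
    HasSum (fun k : ℕ => μ ^ k * hankelIntegrand (ρ * k + 1) ζ)
      (mittagLefflerIntegrand ρ μ ζ) := by
  have hexp : Complex.exp (ρ * ζ) ≠ 0 := Complex.exp_ne_zero _
  have hfactor : Complex.exp (ρ * ζ) - μ =
      Complex.exp (ρ * ζ) * (1 - μ * Complex.exp (-(ρ * ζ))) := by
    rw [Complex.exp_neg]
    field_simp
  have hnum : hankelIntegrand (1 - ρ) ζ = Complex.exp (ρ * ζ) * hankelIntegrand 1 ζ := by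
    rw [hankelIntegrand, hankelIntegrand, ← Complex.exp_add]
    ring_nf
  rw [mittagLefflerIntegrand, hfactor, hnum, mul_div_mul_left _ _ hexp, ← inv_mul_eq_div]
  simp only [pow_mul_hankelIntegrand]
  exact (hasSum_geometric_of_norm_lt_one h).mul_right _

theorem two_pi_I_mul_mittagLeffler_eq_hankelIntegral (hρ : 0 < ρ)
    (hθ : θ ∈ Ioo (π / 2) (3 * π / 2)) (hA : ‖μ‖ * exp (-(ρ * A)) < 1) :
    2 * π * I * mittagLeffler ρ μ = hankelIntegral A θ (mittagLefflerIntegrand ρ μ) := by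
  have hcos : cos θ < 0 := cos_neg_of_mem_Ioo hθ
  have hcont : ∀ z, Continuous (hankelIntegrand z) := fun z =>
    (differentiable_hankelIntegrand z).continuous
  have hsum := hasSum_hankelIntegral (A := A) (θ := θ) (F := mittagLefflerIntegrand ρ μ)
    (f := fun k ζ => μ ^ k * hankelIntegrand (ρ * k + 1) ζ)
    (fun k => (hcont _).const_mul _) (summable_geometric_of_lt_one (by positivity) hA)
    (hcont 1).norm (integrableOn_Ioi_norm_hankelIntegrand 1 A hcos)
    (integrableOn_Ioi_norm_hankelIntegrand 1 A (by rwa [cos_neg]))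
    (fun k ζ hζ => by
      rw [pow_mul_hankelIntegrand, norm_mul, norm_pow]
      gcongr
      exact norm_mul_cexp_neg_le hρ hζ)
    (fun ζ hζ => hasSum_pow_mul_hankelIntegrand ((norm_mul_cexp_neg_le hρ hζ).trans_lt hA))
  rw [← hsum.tsum_eq, mittagLeffler, ← tsum_mul_left]
  refine tsum_congr fun k => ?_
  rw [hankelIntegral_const_mul, hankelIntegral_hankelIntegrand _ A hθ]
  ring

variable {c : ℝ}

lemma norm_mittagLefflerIntegrand_le (hc : 0 < c) (hμ : c ≤ ‖Complex.exp (ρ * ζ) - μ‖) :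
    ‖mittagLefflerIntegrand ρ μ ζ‖ ≤ c⁻¹ * ‖hankelIntegrand (1 - ρ) ζ‖ := by
  rw [mittagLefflerIntegrand, norm_div, div_eq_inv_mul]
  gcongr

lemma integrable_mittagLefflerIntegrand {y : ℝ} (hρ : 0 < ρ) (hy : cos y < 0) (hc : 0 < c)
    (hμ : ∀ x : ℝ, c ≤ ‖Complex.exp (ρ * (x + y * I)) - μ‖) :
    Integrable fun x : ℝ => mittagLefflerIntegrand ρ μ (x + y * I) := by
  have hcont : Continuous (hankelIntegrand (1 - ρ)) :=
    (differentiable_hankelIntegrand _).continuous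
  refine ((integrable_hankelIntegrand (by simpa using hρ) hy).norm.const_mul c⁻¹).mono' ?_
    (Eventually.of_forall fun x => norm_mittagLefflerIntegrand_le hc (hμ x))
  exact (Continuous.div (by fun_prop) (by fun_prop)
    fun x => norm_pos_iff.1 (hc.trans_le (hμ x))).aestronglyMeasurable

theorem two_pi_I_mul_mittagLeffler_eq_hankelLineIntegral (hρ : 0 < ρ)
    (hθ : θ ∈ Ioo (π / 2) (3 * π / 2)) (hc : 0 < c)
    (hμ : ∀ ζ : ℂ, |ζ.im| ≤ θ → c ≤ ‖Complex.exp (ρ * ζ) - μ‖) :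
    2 * π * I * mittagLeffler ρ μ = hankelLineIntegral θ (mittagLefflerIntegrand ρ μ) := by
  obtain ⟨A, hA⟩ : ∃ A, ‖μ‖ * exp (-(ρ * A)) < 1 := by
    have hlim : Tendsto (fun A => ‖μ‖ * exp (-(ρ * A))) atTop (𝓝 0) := by
      simpa using (tendsto_exp_neg_atTop_nhds_zero.comp
        (tendsto_id.const_mul_atTop hρ)).const_mul ‖μ‖
    exact (hlim.eventually_lt_const one_pos).exists
  have hθ0 : 0 ≤ θ := by linarith [hθ.1, pi_pos]
  have hcos : cos θ < 0 := cos_neg_of_mem_Ioo hθ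
  rw [two_pi_I_mul_mittagLeffler_eq_hankelIntegral hρ hθ hA]
  refine hankelIntegral_eq_hankelLineIntegral hθ0 (fun ζ hζ => ?_)
    (g := fun x => c⁻¹ * exp (exp A) * exp (ρ * x)) (fun x hx y hy => ?_)
    (by simpa using (tendsto_exp_mul_atBot hρ).const_mul _)
    (integrable_mittagLefflerIntegrand hρ hcos hc fun x => hμ _ (by simp [abs_of_nonneg hθ0]))
    (integrable_mittagLefflerIntegrand hρ (by rwa [cos_neg]) hc
      fun x => hμ _ (by simp [abs_of_nonneg hθ0]))
  · exact (differentiable_hankelIntegrand _ ζ).div (by fun_prop)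
      (norm_pos_iff.1 (hc.trans_le (hμ ζ hζ)))
  · refine (norm_mittagLefflerIntegrand_le hc (hμ _ (by simpa using hy))).trans ?_
    have hhankel : ‖hankelIntegrand (1 - ρ) (x + y * I)‖ ≤ exp (exp A) * exp (ρ * x) := by
      refine (norm_hankelIntegrand_le (δ := -1) (by simpa using cos_le_one y) hy).trans ?_
      rw [← exp_add, ← exp_add, exp_le_exp]
      simp only [Complex.sub_re, Complex.sub_im, Complex.one_re, Complex.one_im,
        Complex.ofReal_re, Complex.ofReal_im, sub_self, abs_zero]
      linarith [exp_le_exp.2 hx]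
    rw [mul_assoc]
    gcongr

end MittagLeffler

section Expansion

lemma exists_forall_le_norm_cexp_sub {lam : ℂ} (hlam : lam.re < 0) :
    ∃ θ ∈ Ioo (π / 2) (3 * π / 2), ∃ c > 0,
      ∀ η : ℂ, |η.im| ≤ θ → c ≤ ‖Complex.exp η - lam‖ := by
  have hre : -lam.re ≤ ‖lam‖ := (neg_le_abs _).trans (Complex.abs_re_le_norm lam)
  set κ : ℝ := -lam.re / (2 * ‖lam‖) with hκ
  have hnorm : 0 < ‖lam‖ := by linarith
  have hκ0 : 0 < κ := by
    rw [hκ]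
    exact div_pos (by linarith) (by linarith)
  have hκ1 : κ ≤ 1 := by
    rw [hκ, div_le_one (by linarith)]
    linarith
  have hκlam : κ * ‖lam‖ = -lam.re / 2 := by
    rw [hκ]
    field_simp
  refine ⟨arccos (-κ), ⟨?_, by linarith [arccos_le_pi (-κ), pi_pos]⟩, -lam.re / 4, by linarith,
    fun η hη => ?_⟩
  · rw [arccos_neg]
    linarith [arccos_lt_pi_div_two.2 hκ0]
  have hcos : -κ ≤ cos η.im := by
    rw [← cos_abs, ← cos_arccos (x := -κ) (by linarith) (by linarith)]
    exact cos_le_cos_of_nonneg_of_le_pi (abs_nonneg _) (arccos_le_pi _) hη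
  have hsector : -κ * ‖Complex.exp η‖ ≤ (Complex.exp η).re := by
    rw [Complex.exp_re, Complex.norm_exp, mul_comm]
    gcongr
  have hdist : (Complex.exp η).re - lam.re ≤ ‖Complex.exp η - lam‖ :=
    (Complex.re_le_norm _).trans' (Complex.sub_re _ _).ge
  have htriangle : ‖Complex.exp η‖ ≤ ‖lam‖ + ‖Complex.exp η - lam‖ :=
    norm_le_norm_add_norm_sub' _ _
  nlinarith [norm_nonneg (Complex.exp η - lam)]

/-- The second-order term `w² / (w - lam)` of `-lam * w / (w - lam) = w - w² / (w - lam)`, in the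
variable `η = log w`. -/
noncomputable def remainderKernel (lam η : ℂ) : ℂ :=
  Complex.exp (2 * η) / (Complex.exp η - lam)

/-- The integrand of the error term in the large-time expansion of `E_ρ(lam * t ^ ρ)`,
with `τ = log t`. -/
noncomputable def remainderIntegrand (lam : ℂ) (ρ τ : ℝ) (ζ : ℂ) : ℂ :=
  Complex.exp (Complex.exp ζ) * remainderKernel lam (ρ * (ζ - τ))

variable {lam : ℂ} {θ c ρ τ : ℝ}

lemma cexp_mul_sub_mul_exp (lam ζ : ℂ) (ρ τ : ℝ) :
    Complex.exp (ρ * ζ) - lam * exp (ρ * τ) =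
      exp (ρ * τ) * (Complex.exp (ρ * (ζ - τ)) - lam) := by
  rw [mul_sub, ← mul_comm lam, Complex.ofReal_exp, ← Complex.exp_add]
  push_cast
  ring_nf

lemma remainderIntegrand_eq {ζ : ℂ} (h : Complex.exp (ρ * (ζ - τ)) - lam ≠ 0) :
    remainderIntegrand lam ρ τ ζ = exp (-(ρ * τ)) * hankelIntegrand (1 - ρ) ζ
      + lam * mittagLefflerIntegrand ρ (lam * exp (ρ * τ)) ζ := by
  have hτ : (exp (ρ * τ) : ℂ) ≠ 0 := Complex.ofReal_ne_zero.2 (exp_ne_zero _)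
  have hhankel : hankelIntegrand (1 - ρ) ζ =
      exp (ρ * τ) * (Complex.exp (Complex.exp ζ) * Complex.exp (ρ * (ζ - τ))) := by
    rw [hankelIntegrand, Complex.ofReal_exp, ← Complex.exp_add, ← Complex.exp_add]
    push_cast
    ring_nf
  rw [remainderIntegrand, remainderKernel, mittagLefflerIntegrand, cexp_mul_sub_mul_exp, hhankel,
    mul_div_mul_left _ _ hτ, exp_neg, Complex.ofReal_inv, inv_mul_cancel_left₀ hτ, two_mul,
    Complex.exp_add]
  field_simp
  ring

lemma le_norm_cexp_mul_sub (hsep : ∀ η : ℂ, |η.im| ≤ θ → c ≤ ‖Complex.exp η - lam‖)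
    (hρ : ρ ∈ Ioc 0 1) {ζ : ℂ} (hζ : |ζ.im| ≤ θ) (τ : ℝ) :
    c ≤ ‖Complex.exp (ρ * (ζ - τ)) - lam‖ := by
  refine hsep _ ?_
  rw [Complex.im_ofReal_mul, Complex.sub_im, Complex.ofReal_im, sub_zero, abs_mul,
    abs_of_pos hρ.1]
  exact (mul_le_of_le_one_left (abs_nonneg _) hρ.2).trans hζ

lemma le_norm_cexp_mul_sub_mul_exp (hsep : ∀ η : ℂ, |η.im| ≤ θ → c ≤ ‖Complex.exp η - lam‖)
    (hρ : ρ ∈ Ioc 0 1) {ζ : ℂ} (hζ : |ζ.im| ≤ θ) (τ : ℝ) :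
    exp (ρ * τ) * c ≤ ‖Complex.exp (ρ * ζ) - lam * exp (ρ * τ)‖ := by
  rw [cexp_mul_sub_mul_exp, norm_mul, Complex.norm_real, norm_of_nonneg (exp_pos _).le]
  gcongr
  exact le_norm_cexp_mul_sub hsep hρ hζ τ

lemma integrable_remainderIntegrand {y : ℝ} (hy : cos y < 0) (hyθ : |y| ≤ θ) (hc : 0 < c)
    (hsep : ∀ η : ℂ, |η.im| ≤ θ → c ≤ ‖Complex.exp η - lam‖) (hρ : ρ ∈ Ioc 0 1) (τ : ℝ) :
    Integrable fun x : ℝ => remainderIntegrand lam ρ τ (x + y * I) := by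
  have him : ∀ x : ℝ, |(x + y * I : ℂ).im| ≤ θ := fun x => by simpa using hyθ
  refine (((integrable_hankelIntegrand (by simpa using hρ.1) hy).const_mul _).add
    ((integrable_mittagLefflerIntegrand hρ.1 hy (mul_pos (exp_pos (ρ * τ)) hc)
      fun x => le_norm_cexp_mul_sub_mul_exp hsep hρ (him x) τ).const_mul _)).congr
    (Eventually.of_forall fun x => (remainderIntegrand_eq (norm_pos_iff.1 ?_)).symm)
  exact hc.trans_le (le_norm_cexp_mul_sub hsep hρ (him x) τ)

theorem neg_mul_two_pi_I_mul_mittagLeffler (hθ : θ ∈ Ioo (π / 2) (3 * π / 2)) (hc : 0 < c)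
    (hsep : ∀ η : ℂ, |η.im| ≤ θ → c ≤ ‖Complex.exp η - lam‖) (hρ : ρ ∈ Ioc 0 1) (τ : ℝ) :
    -lam * (2 * π * I * mittagLeffler ρ (lam * exp (ρ * τ))) =
      exp (-(ρ * τ)) * (2 * π * I / Complex.Gamma (1 - ρ))
        - hankelLineIntegral θ (remainderIntegrand lam ρ τ) := by
  have hθ0 : |θ| = θ := abs_of_pos (by linarith [hθ.1, pi_pos])
  have hcos : cos θ < 0 := cos_neg_of_mem_Ioo hθ
  have hre : (1 - ρ : ℂ).re < 1 := by simpa using hρ.1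
  have hline : ∀ y : ℝ, |y| = θ → cos y < 0 →
      (lam * ∫ x : ℝ, mittagLefflerIntegrand ρ (lam * exp (ρ * τ)) (x + y * I)) =
        (∫ x : ℝ, remainderIntegrand lam ρ τ (x + y * I)) -
          exp (-(ρ * τ)) * ∫ x : ℝ, hankelIntegrand (1 - ρ) (x + y * I) := by
    intro y hyθ hy
    rw [← integral_const_mul, ← integral_const_mul, ← integral_sub
      (integrable_remainderIntegrand hy hyθ.le hc hsep hρ τ)
      ((integrable_hankelIntegrand hre hy).const_mul _)]
    refine integral_congr_ae (Eventually.of_forall fun x => ?_)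
    have him : |(x + y * I : ℂ).im| ≤ θ := by simp [hyθ]
    exact eq_sub_of_add_eq' (remainderIntegrand_eq
      (norm_pos_iff.1 (hc.trans_le (le_norm_cexp_mul_sub hsep hρ him τ)))).symm
  rw [two_pi_I_mul_mittagLeffler_eq_hankelLineIntegral hρ.1 hθ (mul_pos (exp_pos (ρ * τ)) hc)
    fun ζ hζ => le_norm_cexp_mul_sub_mul_exp hsep hρ hζ τ,
    ← hankelLineIntegral_hankelIntegrand hre hθ, hankelLineIntegral, neg_mul, mul_sub,
    hline θ hθ0 hcos, hline (-θ) (by rwa [abs_neg]) (by rwa [cos_neg]), hankelLineIntegral,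
    hankelLineIntegral]
  ring

end Expansion

section RemainderLipschitz

variable {lam η ζ : ℂ} {θ c β ρ σ τ : ℝ}

lemma hasDerivAt_remainderKernel (h : Complex.exp η - lam ≠ 0) :
    HasDerivAt (remainderKernel lam)
      (Complex.exp η ^ 2 / (Complex.exp η - lam) * (2 - Complex.exp η / (Complex.exp η - lam)))
      η := by
  have hnum : HasDerivAt (fun η => Complex.exp (2 * η)) (Complex.exp (2 * η) * 2) η := by
    simpa using ((hasDerivAt_id η).const_mul 2).cexp
  refine (hnum.div ((Complex.hasDerivAt_exp η).sub_const lam) h).congr_deriv ?_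
  rw [two_mul η, Complex.exp_add]
  field_simp

lemma norm_deriv_remainderKernel_le (hc : 0 < c) (h : c ≤ ‖Complex.exp η - lam‖) :
    ‖deriv (remainderKernel lam) η‖ ≤ (3 + ‖lam‖ / c) / c * exp (2 * η.re) := by
  have hpos : 0 < ‖Complex.exp η - lam‖ := hc.trans_le h
  have hquot : ‖Complex.exp η / (Complex.exp η - lam)‖ ≤ 1 + ‖lam‖ / c :=
    calc ‖Complex.exp η / (Complex.exp η - lam)‖
        = ‖1 + lam / (Complex.exp η - lam)‖ := by
          rw [one_add_div (norm_pos_iff.1 hpos), sub_add_cancel]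
      _ ≤ 1 + ‖lam‖ / ‖Complex.exp η - lam‖ := by
          simpa using norm_add_le 1 (lam / (Complex.exp η - lam))
      _ ≤ 1 + ‖lam‖ / c := by gcongr
  have hfactor : ‖2 - Complex.exp η / (Complex.exp η - lam)‖ ≤ 3 + ‖lam‖ / c :=
    (norm_sub_le _ _).trans (by rw [Complex.norm_two]; linarith)
  calc ‖deriv (remainderKernel lam) η‖
      = exp (2 * η.re) / ‖Complex.exp η - lam‖ *
          ‖2 - Complex.exp η / (Complex.exp η - lam)‖ := by
        rw [(hasDerivAt_remainderKernel (norm_pos_iff.1 hpos)).deriv, norm_mul, norm_div,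
          norm_pow, Complex.norm_exp, ← exp_nat_mul, Nat.cast_ofNat]
    _ ≤ exp (2 * η.re) / c * (3 + ‖lam‖ / c) := by gcongr
    _ = (3 + ‖lam‖ / c) / c * exp (2 * η.re) := by ring

lemma exp_two_mul_mul_sub_le {r x : ℝ} (hβ : β ≤ ρ) (hρr : ρ ≤ r) (hr : r ≤ 1) (hτ : 0 ≤ τ) :
    exp (2 * (r * (x - τ))) ≤ exp (-(2 * ρ * τ)) * (exp (2 * β * x) + exp (2 * x)) := by
  have hx : exp (2 * (r * x)) ≤ exp (2 * β * x) + exp (2 * x) := by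
    rcases le_total x 0 with hx | hx
    · exact (exp_le_exp.2 (by nlinarith)).trans (le_add_of_nonneg_right (exp_pos _).le)
    · exact (exp_le_exp.2 (by nlinarith)).trans (le_add_of_nonneg_left (exp_pos _).le)
  calc exp (2 * (r * (x - τ))) = exp (-(2 * r * τ)) * exp (2 * (r * x)) := by
        rw [← exp_add]
        ring_nf
    _ ≤ exp (-(2 * ρ * τ)) * (exp (2 * β * x) + exp (2 * x)) := by gcongr

lemma norm_sub_ofReal_le (hζ : |ζ.im| ≤ θ) (hτ : 0 ≤ τ) :
    ‖ζ - τ‖ ≤ (1 + τ) * (|ζ.re| + (θ + 1)) := by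
  have hζnorm : ‖ζ‖ ≤ |ζ.re| + θ := (Complex.norm_le_abs_re_add_abs_im ζ).trans (by gcongr)
  have hτnorm : ‖(τ : ℂ)‖ = τ := by rw [Complex.norm_real, norm_of_nonneg hτ]
  nlinarith [norm_sub_le ζ τ, abs_nonneg ζ.re, abs_nonneg ζ.im]

lemma norm_remainderKernel_sub_le (hc : 0 < c)
    (hsep : ∀ η : ℂ, |η.im| ≤ θ → c ≤ ‖Complex.exp η - lam‖) (hβ : 0 < β) (hβρ : β ≤ ρ)
    (hρσ : ρ ≤ σ) (hσ : σ ≤ 1) (hτ : 0 ≤ τ) (hζ : |ζ.im| ≤ θ) :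
    ‖remainderKernel lam (σ * (ζ - τ)) - remainderKernel lam (ρ * (ζ - τ))‖ ≤
      (3 + ‖lam‖ / c) / c * ((|ζ.re| + (θ + 1)) * (exp (2 * β * ζ.re) + exp (2 * ζ.re))) *
        ((1 + τ) * exp (-(2 * ρ * τ)) * (σ - ρ)) := by
  have hsep' : ∀ r ∈ Icc ρ σ, c ≤ ‖Complex.exp (r * (ζ - τ)) - lam‖ := fun r hr =>
    le_norm_cexp_mul_sub hsep ⟨by linarith [hr.1], hr.2.trans hσ⟩ hζ τ
  have hderiv : ∀ r ∈ Icc ρ σ, HasDerivWithinAt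
      (fun r : ℝ => remainderKernel lam (r * (ζ - τ)))
      (deriv (remainderKernel lam) (r * (ζ - τ)) * (ζ - τ)) (Icc ρ σ) r := fun r hr => by
    have hkernel := (hasDerivAt_remainderKernel
      (norm_pos_iff.1 (hc.trans_le (hsep' r hr)))).differentiableAt.hasDerivAt
    have hline : HasDerivAt (fun r : ℝ => (r * (ζ - τ) : ℂ)) (ζ - τ) r := by
      simpa using (hasDerivAt_id r).ofReal_comp.mul_const (ζ - τ)
    exact (hkernel.comp r hline).hasDerivWithinAt
  have hbound : ∀ r ∈ Ico ρ σ, ‖deriv (remainderKernel lam) (r * (ζ - τ)) * (ζ - τ)‖ ≤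
      (3 + ‖lam‖ / c) / c * (exp (-(2 * ρ * τ)) * (exp (2 * β * ζ.re) + exp (2 * ζ.re))) *
        ((1 + τ) * (|ζ.re| + (θ + 1))) := fun r hr => by
    rw [norm_mul]
    gcongr
    · refine (norm_deriv_remainderKernel_le hc (hsep' r ⟨hr.1, hr.2.le⟩)).trans ?_
      rw [Complex.re_ofReal_mul, Complex.sub_re, Complex.ofReal_re]
      gcongr
      exact exp_two_mul_mul_sub_le hβρ hr.1 (hr.2.le.trans hσ) hτ
    · exact norm_sub_ofReal_le hζ hτ
  exact (norm_image_sub_le_of_norm_deriv_le_segment' hderiv hbound σ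
    (right_mem_Icc.2 hρσ)).trans_eq (by ring)

/-- A majorant on the lines `im ζ = ±θ` for the Lipschitz constant of
`r ↦ remainderIntegrand lam r τ ζ` on `[ρ, 1]`, `β ≤ ρ`, apart from the factor
`(1 + τ) * exp (-(2 * ρ * τ))` that carries the dependence on `τ`. -/
noncomputable def remainderMajorant (lam : ℂ) (c θ β x : ℝ) : ℝ :=
  (3 + ‖lam‖ / c) / c * ((|x| + (θ + 1)) * (exp (2 * β * x) + exp (2 * x))) *
    exp (cos θ * exp x)

lemma remainderMajorant_nonneg (lam : ℂ) (hc : 0 ≤ c) (hθ : 0 ≤ θ) (β x : ℝ) :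
    0 ≤ remainderMajorant lam c θ β x := by
  unfold remainderMajorant
  positivity

lemma integrable_remainderMajorant (lam : ℂ) (c : ℝ) (hθ : cos θ < 0) (hβ : 0 < β) :
    Integrable (remainderMajorant lam c θ β) := by
  refine (((integrable_abs_add_mul_exp_mul_sub_mul_exp (mul_pos two_pos hβ)
    (neg_pos.2 hθ) (θ + 1)).add (integrable_abs_add_mul_exp_mul_sub_mul_exp two_pos
    (neg_pos.2 hθ) (θ + 1))).const_mul ((3 + ‖lam‖ / c) / c)).congr
    (Eventually.of_forall fun x => ?_)
  simp only [Pi.add_apply, remainderMajorant, neg_mul, sub_neg_eq_add, exp_add]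
  ring

variable {y : ℝ}

lemma norm_remainderIntegrand_sub_le (hyθ : |y| = θ) (hc : 0 < c)
    (hsep : ∀ η : ℂ, |η.im| ≤ θ → c ≤ ‖Complex.exp η - lam‖) (hβ : 0 < β) (hβρ : β ≤ ρ)
    (hρσ : ρ ≤ σ) (hσ : σ ≤ 1) (hτ : 0 ≤ τ) (x : ℝ) :
    ‖remainderIntegrand lam σ τ (x + y * I) - remainderIntegrand lam ρ τ (x + y * I)‖ ≤
      remainderMajorant lam c θ β x * ((1 + τ) * exp (-(2 * ρ * τ)) * (σ - ρ)) := by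
  have hre : (x + y * I : ℂ).re = x := by simp
  have hkernel := norm_remainderKernel_sub_le (ζ := x + y * I) hc hsep hβ hβρ hρσ hσ hτ
    (by simp [hyθ])
  have hexp : ‖Complex.exp (Complex.exp (x + y * I))‖ = exp (cos θ * exp x) := by
    rw [← hyθ, cos_abs]
    simp [Complex.norm_exp, Complex.exp_re, mul_comm]
  rw [remainderIntegrand, remainderIntegrand, ← mul_sub, norm_mul, hexp]
  refine (mul_le_mul_of_nonneg_left hkernel (exp_pos _).le).trans_eq ?_
  rw [hre, remainderMajorant]
  ring

lemma norm_integral_remainderIntegrand_sub_le (hθ : θ ∈ Ioo (π / 2) (3 * π / 2)) (hyθ : |y| = θ)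
    (hc : 0 < c) (hsep : ∀ η : ℂ, |η.im| ≤ θ → c ≤ ‖Complex.exp η - lam‖) (hβ : 0 < β)
    (hβρ : β ≤ ρ) (hρσ : ρ ≤ σ) (hσ : σ ≤ 1) (hτ : 0 ≤ τ) :
    ‖(∫ x : ℝ, remainderIntegrand lam σ τ (x + y * I))
        - ∫ x : ℝ, remainderIntegrand lam ρ τ (x + y * I)‖ ≤
      (∫ x, remainderMajorant lam c θ β x) * ((1 + τ) * exp (-(2 * ρ * τ)) * (σ - ρ)) := by
  have hcos : cos θ < 0 := cos_neg_of_mem_Ioo hθ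
  have hinteg : ∀ r ∈ Icc ρ σ, Integrable fun x : ℝ => remainderIntegrand lam r τ (x + y * I) :=
    fun r hr => integrable_remainderIntegrand (by rwa [← cos_abs, hyθ]) hyθ.le hc hsep
      ⟨by linarith [hr.1], hr.2.trans hσ⟩ τ
  rw [← integral_sub (hinteg σ ⟨hρσ, le_rfl⟩) (hinteg ρ ⟨le_rfl, hρσ⟩), ← integral_mul_const]
  exact norm_integral_le_of_norm_le ((integrable_remainderMajorant lam c hcos hβ).mul_const _)
    (Eventually.of_forall (norm_remainderIntegrand_sub_le hyθ hc hsep hβ hβρ hρσ hσ hτ))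

theorem norm_hankelLineIntegral_remainderIntegrand_sub_le
    (hθ : θ ∈ Ioo (π / 2) (3 * π / 2)) (hc : 0 < c)
    (hsep : ∀ η : ℂ, |η.im| ≤ θ → c ≤ ‖Complex.exp η - lam‖) (hβ : 0 < β) (hβρ : β ≤ ρ)
    (hρσ : ρ ≤ σ) (hσ : σ ≤ 1) (hτ : 0 ≤ τ) :
    ‖hankelLineIntegral θ (remainderIntegrand lam σ τ)
        - hankelLineIntegral θ (remainderIntegrand lam ρ τ)‖ ≤
      2 * (∫ x, remainderMajorant lam c θ β x) *
        ((1 + τ) * exp (-(2 * ρ * τ)) * (σ - ρ)) := by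
  have hθ0 : |θ| = θ := abs_of_pos (by linarith [hθ.1, pi_pos])
  rw [hankelLineIntegral, hankelLineIntegral, sub_sub_sub_comm, mul_assoc, two_mul]
  exact (norm_sub_le _ _).trans (add_le_add
    (norm_integral_remainderIntegrand_sub_le hθ hθ0 hc hsep hβ hβρ hρσ hσ hτ)
    (norm_integral_remainderIntegrand_sub_le hθ (by rwa [abs_neg]) hc hsep hβ hβρ hρσ hσ hτ))

end RemainderLipschitz

section GammaReciprocal

lemma Gamma_add_le_Gamma_mul_rpow {s h : ℝ} (hs : 0 < s) (h0 : 0 ≤ h) (h1 : h ≤ 1) :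
    Gamma (s + h) ≤ Gamma s * s ^ h := by
  rcases h0.eq_or_lt with rfl | h0
  · simp
  rcases h1.eq_or_lt with rfl | h1
  · rw [Gamma_add_one hs.ne', rpow_one, mul_comm]
  have hconvex := Gamma_mul_add_mul_le_rpow_Gamma_mul_rpow_Gamma hs (by linarith : 0 < s + 1)
    (sub_pos.2 h1) h0 (sub_add_cancel 1 h)
  rw [Gamma_add_one hs.ne', mul_rpow hs.le (Gamma_pos_of_pos hs).le, mul_left_comm,
    ← rpow_add (Gamma_pos_of_pos hs), sub_add_cancel, rpow_one] at hconvex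
  convert hconvex using 1 <;> ring_nf

lemma inv_Gamma_eq_div_Gamma_add_one (x : ℝ) : (Gamma x)⁻¹ = x / Gamma (x + 1) := by
  rcases eq_or_ne x 0 with rfl | hx
  · simp
  · rw [Gamma_add_one hx, div_mul_cancel_left₀ hx]

variable {x y : ℝ}

theorem one_sub_mul_sub_le_inv_Gamma_sub (hx : 0 ≤ x) (hxy : x ≤ y) (hy : y ≤ 1) :
    (1 - x) * (y - x) ≤ (Gamma y)⁻¹ - (Gamma x)⁻¹ := by
  have hGx : 0 < Gamma (x + 1) := Gamma_pos_of_pos (by linarith)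
  have hGy : 0 < Gamma (y + 1) := Gamma_pos_of_pos (by linarith)
  have hGx1 : Gamma (x + 1) ≤ 1 := by
    simpa [add_comm] using Gamma_add_le_Gamma_mul_rpow one_pos hx (hxy.trans hy)
  have hgrowth : Gamma (y + 1) ≤ Gamma (x + 1) * (1 + x * (y - x)) := by
    have hwendel := Gamma_add_le_Gamma_mul_rpow (by linarith : 0 < x + 1) (sub_nonneg.2 hxy)
      (by linarith)
    have hbernoulli : (x + 1) ^ (y - x) ≤ 1 + x * (y - x) := by
      rw [add_comm x, mul_comm x]
      exact rpow_one_add_le_one_add_mul_self (by linarith) (sub_nonneg.2 hxy) (by linarith)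
    rw [show x + 1 + (y - x) = y + 1 by ring] at hwendel
    exact hwendel.trans (by gcongr)
  have hden : 0 < 1 + x * (y - x) := by nlinarith
  calc (1 - x) * (y - x) ≤ ((1 - x) * (y - x)) / Gamma (x + 1) :=
        le_div_self (by nlinarith) hGx hGx1
    _ ≤ y / (Gamma (x + 1) * (1 + x * (y - x))) - x / Gamma (x + 1) := by
        rw [← div_div, div_right_comm, ← sub_div]
        gcongr
        rw [le_sub_iff_add_le, le_div_iff₀ hden]
        nlinarith [mul_nonneg (mul_nonneg hx (sub_nonneg.2 hxy)) (sub_nonneg.2 hy),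
          mul_nonneg (mul_nonneg hx (sub_nonneg.2 hxy)) (sub_nonneg.2 hxy)]
    _ ≤ y / Gamma (y + 1) - x / Gamma (x + 1) := by
        gcongr
        linarith
    _ = (Gamma y)⁻¹ - (Gamma x)⁻¹ := by
        rw [inv_Gamma_eq_div_Gamma_add_one, inv_Gamma_eq_div_Gamma_add_one]

lemma exp_neg_mul_mul_le_sub {ρ σ τ : ℝ} (hρ : 0 ≤ ρ) (hρσ : ρ ≤ σ) (hσ : σ ≤ 1) (hτ : 0 ≤ τ) :
    exp (-(ρ * τ)) * (σ * (σ - ρ)) ≤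
      exp (-(ρ * τ)) * (Gamma (1 - ρ))⁻¹ - exp (-(σ * τ)) * (Gamma (1 - σ))⁻¹ := by
  have hgamma := one_sub_mul_sub_le_inv_Gamma_sub (x := 1 - σ) (y := 1 - ρ) (by linarith)
    (by linarith) (by linarith)
  rw [sub_sub_cancel, sub_sub_sub_cancel_left] at hgamma
  have hinv : 0 ≤ (Gamma (1 - σ))⁻¹ := inv_nonneg.2 (Gamma_nonneg_of_nonneg (by linarith))
  calc exp (-(ρ * τ)) * (σ * (σ - ρ))
      ≤ exp (-(ρ * τ)) * ((Gamma (1 - ρ))⁻¹ - (Gamma (1 - σ))⁻¹) := by gcongr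
    _ = exp (-(ρ * τ)) * (Gamma (1 - ρ))⁻¹ - exp (-(ρ * τ)) * (Gamma (1 - σ))⁻¹ := mul_sub _ _ _
    _ ≤ exp (-(ρ * τ)) * (Gamma (1 - ρ))⁻¹ - exp (-(σ * τ)) * (Gamma (1 - σ))⁻¹ := by
        gcongr ?_ - ?_
        exact mul_le_mul_of_nonneg_right (exp_le_exp.2 (by nlinarith)) hinv

end GammaReciprocal

section Injectivity

variable {lam : ℂ} {θ c β ρ σ τ : ℝ}

lemma hankelLineIntegral_remainderIntegrand_sub_eq (hθ : θ ∈ Ioo (π / 2) (3 * π / 2)) (hc : 0 < c)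
    (hsep : ∀ η : ℂ, |η.im| ≤ θ → c ≤ ‖Complex.exp η - lam‖) (hρ : ρ ∈ Ioc 0 1)
    (hσ : σ ∈ Ioc 0 1)
    (heq : mittagLeffler ρ (lam * exp (ρ * τ)) = mittagLeffler σ (lam * exp (σ * τ))) :
    hankelLineIntegral θ (remainderIntegrand lam σ τ)
        - hankelLineIntegral θ (remainderIntegrand lam ρ τ) =
      -(2 * π * (exp (-(ρ * τ)) * (Gamma (1 - ρ))⁻¹
        - exp (-(σ * τ)) * (Gamma (1 - σ))⁻¹) : ℝ) * I := by
  have hΓ : ∀ r : ℝ, Complex.Gamma (1 - r) = Gamma (1 - r) := fun r => by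
    rw [← Complex.Gamma_ofReal, Complex.ofReal_sub, Complex.ofReal_one]
  have hexpansion := neg_mul_two_pi_I_mul_mittagLeffler hθ hc hsep hρ τ
  rw [heq, neg_mul_two_pi_I_mul_mittagLeffler hθ hc hsep hσ τ, hΓ, hΓ] at hexpansion
  simp only [Complex.ofReal_mul, Complex.ofReal_sub, Complex.ofReal_inv, Complex.ofReal_ofNat]
  linear_combination -hexpansion

lemma two_pi_mul_le_of_mittagLeffler_eq (hθ : θ ∈ Ioo (π / 2) (3 * π / 2)) (hc : 0 < c)
    (hsep : ∀ η : ℂ, |η.im| ≤ θ → c ≤ ‖Complex.exp η - lam‖) (hβ : 0 < β) (hβρ : β ≤ ρ)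
    (hρσ : ρ < σ) (hσ : σ ≤ 1) (hτ : 0 ≤ τ)
    (heq : mittagLeffler ρ (lam * exp (ρ * τ)) = mittagLeffler σ (lam * exp (σ * τ))) :
    2 * π * β ≤ 2 * (∫ x, remainderMajorant lam c θ β x) * ((1 + τ) * exp (-(β * τ))) := by
  set M := 2 * ∫ x, remainderMajorant lam c θ β x
  have hρ : 0 < ρ := hβ.trans_le hβρ
  have hM : 0 ≤ M := mul_nonneg two_pos.le (integral_nonneg
    (remainderMajorant_nonneg lam hc.le (by linarith [hθ.1, pi_pos]) β))
  have hnorm := norm_hankelLineIntegral_remainderIntegrand_sub_le hθ hc hsep hβ hβρ hρσ.le hσ hτ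
  rw [hankelLineIntegral_remainderIntegrand_sub_eq hθ hc hsep ⟨hρ, hρσ.le.trans hσ⟩
    ⟨hρ.trans hρσ, hσ⟩ heq, norm_mul, Complex.norm_I, mul_one, norm_neg,
    Complex.norm_real] at hnorm
  have hscaled : 2 * π * β * (exp (-(ρ * τ)) * (σ - ρ)) ≤
      M * ((1 + τ) * exp (-(ρ * τ))) * (exp (-(ρ * τ)) * (σ - ρ)) :=
    calc 2 * π * β * (exp (-(ρ * τ)) * (σ - ρ))
        ≤ 2 * π * (exp (-(ρ * τ)) * (σ * (σ - ρ))) := by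
          rw [mul_assoc, mul_left_comm β]
          gcongr
          linarith
      _ ≤ 2 * π * (exp (-(ρ * τ)) * (Gamma (1 - ρ))⁻¹
            - exp (-(σ * τ)) * (Gamma (1 - σ))⁻¹) := by
          gcongr
          exact exp_neg_mul_mul_le_sub hρ.le hρσ.le hσ hτ
      _ ≤ M * ((1 + τ) * exp (-(2 * ρ * τ)) * (σ - ρ)) := (le_norm_self _).trans hnorm
      _ = M * ((1 + τ) * exp (-(ρ * τ))) * (exp (-(ρ * τ)) * (σ - ρ)) := by
          rw [show -(2 * ρ * τ) = -(ρ * τ) + -(ρ * τ) by ring, exp_add]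
          ring
  have hpos : 0 < exp (-(ρ * τ)) * (σ - ρ) := mul_pos (exp_pos _) (sub_pos.2 hρσ)
  exact (le_of_mul_le_mul_right hscaled hpos).trans (by gcongr)

lemma tendsto_one_add_mul_exp_neg_mul_atTop (hβ : 0 < β) :
    Tendsto (fun τ => (1 + τ) * exp (-(β * τ))) atTop (𝓝 0) := by
  have hone := tendsto_rpow_mul_exp_neg_mul_atTop_nhds_zero 0 β hβ
  have hid := tendsto_rpow_mul_exp_neg_mul_atTop_nhds_zero 1 β hβ
  simpa [add_mul] using hone.add hid

theorem eventually_injOn_mittagLeffler (hlam : lam.re < 0) (hβ : 0 < β) :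
    ∀ᶠ t : ℝ in atTop,
      InjOn (fun ρ : ℝ => mittagLeffler ρ (lam * ((t ^ ρ : ℝ) : ℂ))) (Icc β 1) := by
  obtain ⟨θ, hθ, c, hc, hsep⟩ := exists_forall_le_norm_cexp_sub hlam
  have hsmall : ∀ᶠ t in atTop, 2 * (∫ x, remainderMajorant lam c θ β x) *
      ((1 + log t) * exp (-(β * log t))) < 2 * π * β := by
    have hlim := ((tendsto_one_add_mul_exp_neg_mul_atTop hβ).comp tendsto_log_atTop).const_mul
      (2 * ∫ x, remainderMajorant lam c θ β x)
    rw [mul_zero] at hlim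
    exact hlim.eventually_lt_const (by positivity)
  filter_upwards [hsmall, eventually_ge_atTop 1] with t ht ht1
  have hpow : ∀ ρ : ℝ, t ^ ρ = exp (ρ * log t) := fun ρ => by
    rw [rpow_def_of_pos (by linarith), mul_comm]
  simp only [hpow]
  refine injOn_iff_injective.2 (.of_lt_imp_ne fun ρ σ hρσ heq => ht.not_ge ?_)
  exact two_pi_mul_le_of_mittagLeffler_eq hθ hc hsep hβ ρ.2.1 hρσ σ.2.2 (log_nonneg ht1) heq

lemma existsUnique_sum_mul_eq {ι α R : Type*} [Fintype ι] [DecidableEq ι] [CommRing R]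
    {K : Matrix ι ι R} (hK : IsUnit K) {f : ι → α → R} {S : Set α} (hf : ∀ l, InjOn (f l) S)
    {d : ι → R} (hd : ∀ l, K⁻¹.mulVec d l ∈ f l '' S) :
    ∃! B : ι → α, (∀ l, B l ∈ S) ∧ ∀ j, ∑ l, K j l * f l (B l) = d j := by
  have hsolve : ∀ v : ι → R, (∀ j, ∑ l, K j l * v l = d j) ↔ K⁻¹.mulVec d = v := fun v => by
    have hdet : IsUnit K.det := (Matrix.isUnit_iff_isUnit_det K).1 hK
    rw [← funext_iff]
    change K.mulVec v = d ↔ _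
    constructor
    · rintro rfl
      rw [Matrix.mulVec_mulVec, Matrix.nonsing_inv_mul K hdet, Matrix.one_mulVec]
    · rintro rfl
      rw [Matrix.mulVec_mulVec, Matrix.mul_nonsing_inv K hdet, Matrix.one_mulVec]
  choose B hBS hB using hd
  refine ⟨B, ⟨hBS, (hsolve _).2 (funext hB).symm⟩, fun B' ⟨hB'S, hB'⟩ => funext fun l => ?_⟩
  exact hf l (hB'S l) (hBS l) ((congrFun ((hsolve _).1 hB') l).symm.trans (hB l).symm)

end Injectivity

end CaputoInverse

/-- **Theorem (Caputo case, reduced inverse problem).** Let `K` be an invertible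
`m × m` complex matrix, `Re λ_l < 0` for all `l`, and `0 < β₀ < 1`. Then there is
`T₀ > 1` such that for every `t₀ ≥ T₀` and every data vector `d` whose transformed
components `(K⁻¹ d)_l` lie in the range of `ρ ↦ E_ρ(λ_l t₀^ρ)` over `[β₀, 1)`,
there is a unique vector-order `B ∈ [β₀, 1]^m` with
`∑_l K_{j,l} E_{B_l}(λ_l t₀^{B_l}) = d_j` for all `j`. -/
theorem caputo_inverse_problem (m : ℕ) (hm : 1 ≤ m)
    (K : Matrix (Fin m) (Fin m) ℂ) (hK : IsUnit K)
    (lam : Fin m → ℂ) (hlam : ∀ l, (lam l).re < 0)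
    (β₀ : ℝ) (hβ₀ : 0 < β₀) (hβ₀1 : β₀ < 1) :
    ∃ T₀ : ℝ, 1 < T₀ ∧ ∀ t₀ : ℝ, T₀ ≤ t₀ →
      ∀ d : Fin m → ℂ,
        (∀ l, K⁻¹.mulVec d l ∈
          (fun ρ : ℝ => mittagLeffler ρ (lam l * ((t₀ ^ ρ : ℝ) : ℂ))) '' Set.Ico β₀ 1) →
        ∃! B : Fin m → ℝ, (∀ l, B l ∈ Set.Icc β₀ 1) ∧
          ∀ j, ∑ l, K j l * mittagLeffler (B l) (lam l * ((t₀ ^ (B l) : ℝ) : ℂ)) = d j := by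
  have hinj : ∀ᶠ t : ℝ in Filter.atTop, ∀ l, Set.InjOn
      (fun ρ : ℝ => mittagLeffler ρ (lam l * ((t ^ ρ : ℝ) : ℂ))) (Set.Icc β₀ 1) :=
    Filter.eventually_all.2 fun l => CaputoInverse.eventually_injOn_mittagLeffler (hlam l) hβ₀
  obtain ⟨T, hT⟩ := Filter.eventually_atTop.1 hinj
  refine ⟨max T 2, lt_max_of_lt_right one_lt_two, fun t₀ ht₀ d hd => ?_⟩
  exact CaputoInverse.existsUnique_sum_mul_eq hK (hT t₀ ((le_max_left T 2).trans ht₀))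
    fun l => Set.image_mono Set.Ico_subset_Icc_self (hd l)
end

section
/- Let m ≥ 1, let K be an invertible m × m complex matrix, let λ₁, …, λ_m ∈ ℂ satisfy Re λ_l < 0 and |Re λ_l| ≠ |Im λ_l| for every l, and let 0 < β₀ < 1. Then there exists T₁ > 1 such that for every t₀ ≥ T₁ the following holds: if d ∈ ℂ^m is such that for every l the l-th component b_l of the vector K⁻¹·d lies in the image of [β₀, 1) under ρ ↦ t₀^{ρ−1}·E_{ρ,ρ}(λ_l·t₀^ρ), then there exists a unique vector B = (β₁*, …, β_m*) with β_l* ∈ [β₀, 1] for every l such that ∑_{l=1}^m K_{j,l} · t₀^{β_l*−1}·E_{β_l*,β_l*}(λ_l·t₀^{β_l*}) = d_j for every j = 1, …, m. -/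
/-- The two-parameter Mittag-Leffler function with equal parameters,
`E_{β,β}(z) = ∑ₖ zᵏ / Γ(βk + β)`. -/
noncomputable def mittagLeffler2 (β : ℝ) (z : ℂ) : ℂ :=
  ∑' k : ℕ, z ^ k / Complex.Gamma (β * k + β)

/-
Deforming the Hankel contour, `t` times the solution symbol of order `ρ` is the contour integral
of `e ^ s / (u - lam)` with `u = (s / t) ^ ρ`. Since
`lam ^ 2 * (u - lam)⁻¹ = -lam - u + u ^ 2 * (u - lam)⁻¹`, where the constant integrates to `0` and
`-u` to `t ^ (-ρ) * ρ * (1 - ρ) / Γ(2 - ρ)`, the symbol is, up to a nonzero factor, this leading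
term plus the integral of `u ^ 2 * (u - lam)⁻¹`. For large `t` the leading term decreases from
`ρ₁` to `ρ₂` by at least `c * t ^ (-ρ₁) * (ρ₂ - ρ₁)`, while the remainder changes by at most
`C * t ^ (-2 * ρ₁) * (1 + log t) * (ρ₂ - ρ₁)`. Hence the symbol is injective in `ρ` on `[β₀, 1]`,
and inverting `K` decouples the system into these scalar equations.
-/

open Set Filter Topology MeasureTheory ComplexConjugate

section Sector

/-- The open sector of all `s ≠ 0` with `|arg s| < θ`, where `cos θ = -κ`. It contains the right
half-plane if `0 ≤ κ`, and is contained in it if `κ ≤ 0`. -/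
def sector (κ : ℝ) : Set ℂ := {s | -κ * ‖s‖ < s.re}

variable {κ : ℝ}

theorem mem_sector {s : ℂ} : s ∈ sector κ ↔ -κ * ‖s‖ < s.re := Iff.rfl

theorem isOpen_sector : IsOpen (sector κ) :=
  isOpen_lt (by fun_prop) Complex.continuous_re

theorem convex_sector_neg (hκ : 0 ≤ κ) : Convex ℝ (sector (-κ)) := by
  have h : ConcaveOn ℝ univ fun s : ℂ ↦ s.re - κ * ‖s‖ :=
    (Complex.reLm.concaveOn convex_univ).sub (convexOn_univ_norm.smul hκ)
  simpa [sector] using h.convex_gt 0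

theorem zero_notMem_sector : (0 : ℂ) ∉ sector κ := by simp [sector]

theorem ne_zero_of_mem_sector {s : ℂ} (hs : s ∈ sector κ) : s ≠ 0 :=
  ne_of_mem_of_not_mem hs zero_notMem_sector

theorem ofReal_mem_sector (hκ : -1 < κ) {x : ℝ} (hx : 0 < x) : (x : ℂ) ∈ sector κ := by
  rw [mem_sector, Complex.norm_of_nonneg hx.le, Complex.ofReal_re]
  nlinarith

theorem conj_mem_sector {s : ℂ} (hs : s ∈ sector κ) : conj s ∈ sector κ := by
  simpa [sector] using hs

theorem ofReal_mul_mem_sector {s : ℂ} (hs : s ∈ sector κ) {r : ℝ} (hr : 0 < r) :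
    r * s ∈ sector κ := by
  rw [mem_sector, norm_mul, Complex.norm_of_nonneg hr.le, Complex.re_ofReal_mul]
  nlinarith [mem_sector.1 hs]

theorem sector_subset_slitPlane (hκ : κ ≤ 1) : sector κ ⊆ Complex.slitPlane := by
  intro s hs
  by_contra h
  obtain ⟨hre, him⟩ : s.re ≤ 0 ∧ s.im = 0 := by
    simpa [Complex.mem_slitPlane_iff, not_or] using h
  have hnorm : ‖s‖ = -s.re := by
    rw [Complex.norm_eq_sqrt_sq_add_sq, him, zero_pow two_ne_zero, add_zero, Real.sqrt_sq_eq_abs,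
      abs_of_nonpos hre]
  nlinarith [mem_sector.1 hs]

theorem le_norm_sub_of_mem_sector (hκ : 0 ≤ κ) {u : ℂ} (hu : u ∈ sector κ) (z : ℂ) :
    (-z.re - κ * ‖z‖) / (1 + κ) ≤ ‖u - z‖ := by
  rw [div_le_iff₀ (by linarith)]
  have hre : u.re - z.re ≤ ‖u - z‖ := by simpa using Complex.re_le_norm (u - z)
  have hnorm : κ * ‖u‖ ≤ κ * (‖u - z‖ + ‖z‖) := by
    gcongr
    simpa using norm_add_le (u - z) z
  linarith [mem_sector.1 hu]

theorem sector_gap_pos (hκ : 0 ≤ κ) {z : ℂ} (hz : -z ∈ sector (-κ)) :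
    0 < (-z.re - κ * ‖z‖) / (1 + κ) := by
  refine div_pos ?_ (by linarith)
  simpa [sector] using hz

theorem sub_ne_zero_of_mem_sector (hκ : 0 ≤ κ) {u z : ℂ} (hu : u ∈ sector κ)
    (hz : -z ∈ sector (-κ)) : u - z ≠ 0 :=
  norm_pos_iff.1 ((sector_gap_pos hκ hz).trans_le (le_norm_sub_of_mem_sector hκ hu z))

theorem norm_inv_sub_le_of_mem_sector (hκ : 0 ≤ κ) {u z : ℂ} (hu : u ∈ sector κ)
    (hz : -z ∈ sector (-κ)) : ‖(u - z)⁻¹‖ ≤ ((-z.re - κ * ‖z‖) / (1 + κ))⁻¹ := by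
  rw [norm_inv]
  exact inv_anti₀ (sector_gap_pos hκ hz) (le_norm_sub_of_mem_sector hκ hu z)

theorem cpow_mem_sector {s : ℂ} (hs : s ∈ sector κ) {ρ : ℝ} (hρ : ρ ∈ Icc (0 : ℝ) 1) :
    s ^ (ρ : ℂ) ∈ sector κ := by
  have hs0 : 0 < ‖s‖ := norm_pos_iff.2 (ne_zero_of_mem_sector hs)
  have hcos : Real.cos s.arg ≤ Real.cos (s.arg * ρ) := by
    rw [← Real.cos_abs s.arg, ← Real.cos_abs (s.arg * ρ), abs_mul, abs_of_nonneg hρ.1]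
    exact Real.cos_le_cos_of_nonneg_of_le_pi (mul_nonneg (abs_nonneg _) hρ.1)
      (Complex.abs_arg_le_pi s) (mul_le_of_le_one_right (abs_nonneg _) hρ.2)
  have harg : -κ < Real.cos s.arg := by
    rw [Complex.cos_arg (ne_zero_of_mem_sector hs), lt_div_iff₀ hs0]
    exact hs
  rw [mem_sector, Complex.cpow_ofReal_re, Complex.norm_cpow_real, mul_comm]
  exact mul_lt_mul_of_pos_left (harg.trans_le hcos) (Real.rpow_pos_of_pos hs0 ρ)

variable {a ζ : ℂ} {r : ℝ}

theorem add_ofReal_mul_mem_sector (hκ : 0 ≤ κ) (ha : a ∈ sector (-κ)) (hζ : ζ ∈ sector κ)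
    (hr : 0 ≤ r) : a + r * ζ ∈ sector κ := by
  have hnorm : κ * ‖r * ζ‖ ≤ κ * (‖a + r * ζ‖ + ‖a‖) := by
    gcongr
    simpa using norm_sub_le (a + r * ζ) a
  have hrζ : -κ * ‖r * ζ‖ ≤ r * ζ.re := by
    rw [norm_mul, Complex.norm_of_nonneg hr]
    nlinarith [mem_sector.1 hζ]
  rw [mem_sector, Complex.add_re, Complex.re_ofReal_mul]
  linarith [mem_sector.1 ha]

end Sector

section ParametricIntegral

variable {α E : Type*} [MeasurableSpace α] {μ : Measure α} [NormedAddCommGroup E] [NormedSpace ℂ E]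
  {F : ℂ → α → E} {bound : α → ℝ} {U : Set ℂ} {z₀ : ℂ}

theorem aestronglyMeasurable_deriv_of_differentiableAt
    (hmeas : ∀ᶠ z in 𝓝 z₀, AEStronglyMeasurable (F z) μ)
    (hdiff : ∀ᵐ y ∂μ, DifferentiableAt ℂ (F · y) z₀) :
    AEStronglyMeasurable (fun y ↦ deriv (F · y) z₀) μ := by
  have hmeas₀ : AEStronglyMeasurable (F z₀) μ := hmeas.self_of_nhds
  have hev : ∀ᶠ z in 𝓝[≠] z₀, AEStronglyMeasurable (fun y ↦ slope (F · y) z₀ z) μ := by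
    filter_upwards [hmeas.filter_mono nhdsWithin_le_nhds] with z hz
    exact (hz.sub hmeas₀).const_smul _
  obtain ⟨z, hz⟩ := exists_seq_tendsto (𝓝[≠] z₀)
  obtain ⟨N, hN⟩ := eventually_atTop.1 (hz.eventually hev)
  refine aestronglyMeasurable_of_tendsto_ae atTop (fun n ↦ hN (n + N) le_add_self) ?_
  filter_upwards [hdiff] with y hy
  exact (hasDerivAt_iff_tendsto_slope.1 hy.hasDerivAt).comp (hz.comp (tendsto_add_atTop_nat N))

theorem hasDerivAt_integral_of_differentiableOn (hU : U ∈ 𝓝 z₀)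
    (hmeas : ∀ z ∈ U, AEStronglyMeasurable (F z) μ)
    (hdiff : ∀ᵐ y ∂μ, DifferentiableOn ℂ (F · y) U)
    (hbound : ∀ᵐ y ∂μ, ∀ z ∈ U, ‖F z y‖ ≤ bound y) (hint : Integrable bound μ) :
    Integrable (fun y ↦ deriv (F · y) z₀) μ ∧
      HasDerivAt (fun z ↦ ∫ y, F z y ∂μ) (∫ y, deriv (F · y) z₀ ∂μ) z₀ := by
  obtain ⟨ε, hε, hball⟩ := Metric.mem_nhds_iff.1 hU
  have hnear : ∀ z ∈ Metric.ball z₀ (ε / 2), Metric.closedBall z (ε / 3) ⊆ U := by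
    intro z hz
    refine (Metric.closedBall_subset_ball' ?_).trans hball
    linarith [Metric.mem_ball.1 hz]
  -- Cauchy's estimate turns the bound on `F` into one on its derivative.
  refine hasDerivAt_integral_of_dominated_loc_of_deriv_le (F' := fun z y ↦ deriv (F · y) z)
    (bound := fun y ↦ bound y / (ε / 3)) (Metric.ball_mem_nhds z₀ (half_pos hε))
    (mem_of_superset hU hmeas) ?_
    (aestronglyMeasurable_deriv_of_differentiableAt (mem_of_superset hU hmeas) ?_) ?_
    (hint.div_const _) ?_
  · have hz₀ := mem_of_mem_nhds hU
    exact hint.mono' (hmeas z₀ hz₀) (hbound.mono fun y h ↦ h z₀ hz₀)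
  · exact hdiff.mono fun y h ↦ h.differentiableAt hU
  · filter_upwards [hdiff, hbound] with y hdiff hbound z hz
    refine Complex.norm_deriv_le_of_forall_mem_sphere_norm_le (by positivity)
      (hdiff.diffContOnCl_ball (hnear z hz)) fun w hw ↦ ?_
    exact hbound w (hnear z hz (Metric.sphere_subset_closedBall hw))
  · filter_upwards [hdiff] with y hdiff z hz
    have hzU := mem_of_superset (Metric.closedBall_mem_nhds z (by positivity)) (hnear z hz)
    exact (hdiff.differentiableAt hzU).hasDerivAt

end ParametricIntegral

section GammaIntegral

variable {a c : ℂ}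

theorem norm_cpow_mul_exp_neg_mul (a c : ℂ) {x : ℝ} (hx : 0 < x) :
    ‖(x : ℂ) ^ (a - 1) * Complex.exp (-(c * x))‖ = x ^ (a.re - 1) * Real.exp (-c.re * x) := by
  rw [norm_mul, Complex.norm_cpow_eq_rpow_re_of_pos hx, Complex.norm_exp]
  simp

theorem differentiableOn_integral_cpow_mul_exp_neg_mul (ha : 0 < a.re) :
    DifferentiableOn ℂ (fun c : ℂ ↦ ∫ x in Ioi (0 : ℝ), (x : ℂ) ^ (a - 1) * Complex.exp (-(c * x)))
      {c | 0 < c.re} := by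
  intro c hc
  rw [mem_ofPred_eq] at hc
  have hU : {z : ℂ | c.re / 2 < z.re} ∈ 𝓝 c :=
    (isOpen_lt continuous_const Complex.continuous_re).mem_nhds (half_lt_self hc)
  refine (hasDerivAt_integral_of_differentiableOn
    (bound := fun x ↦ x ^ (a.re - 1) * Real.exp (-(c.re / 2) * x)) hU (fun z _ ↦ ?_)
    (.of_forall fun x ↦ by fun_prop) ?_ ?_).2.differentiableAt.differentiableWithinAt
  · exact Measurable.aestronglyMeasurable (by fun_prop)
  · filter_upwards [ae_restrict_mem measurableSet_Ioi] with x hx z hz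
    have hx : 0 < x := hx
    rw [norm_cpow_mul_exp_neg_mul a z hx]
    gcongr
  · rw [← IntegrableOn]
    simpa using integrableOn_rpow_mul_exp_neg_mul_rpow (s := a.re - 1) (by linarith) one_pos
      (half_pos hc)

theorem integral_cpow_mul_exp_neg_mul_Ioi_of_re_pos (ha : 0 < a.re) (hc : 0 < c.re) :
    ∫ x in Ioi (0 : ℝ), (x : ℂ) ^ (a - 1) * Complex.exp (-(c * x)) =
      c ^ (-a) * Complex.Gamma a := by
  have hopen : IsOpen {c : ℂ | 0 < c.re} := isOpen_lt continuous_const Complex.continuous_re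
  have hright : DifferentiableOn ℂ (fun c : ℂ ↦ c ^ (-a) * Complex.Gamma a) {c | 0 < c.re} :=
    fun z hz ↦ ((differentiableAt_id.cpow_const (.inl hz)).mul_const _).differentiableWithinAt
  have hreal (y : ℝ) (hy : 0 < y) :
      ∫ x in Ioi (0 : ℝ), (x : ℂ) ^ (a - 1) * Complex.exp (-(y * x)) =
        (y : ℂ) ^ (-a) * Complex.Gamma a := by
    rw [Complex.integral_cpow_mul_exp_neg_mul_Ioi ha hy, one_div, Complex.inv_cpow _ _
      (by simpa [Complex.arg_ofReal_of_nonneg hy.le] using Real.pi_pos.ne), Complex.cpow_neg]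
  have hne : Tendsto ((↑) : ℝ → ℂ) (𝓝[≠] 1) (𝓝[≠] 1) := by
    rw [← Complex.ofReal_one]
    exact Complex.continuous_ofReal.continuousWithinAt.tendsto_nhdsWithin
      fun x hx ↦ by simpa using hx
  refine ((differentiableOn_integral_cpow_mul_exp_neg_mul ha).analyticOnNhd
    hopen).eqOn_of_preconnected_of_frequently_eq (hright.analyticOnNhd hopen)
    (convex_halfSpace_re_gt 0).isPreconnected (z₀ := 1) (by simp) (hne.frequently ?_) hc
  exact ((lt_mem_nhds one_pos).filter_mono nhdsWithin_le_nhds).frequently.mono hreal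

end GammaIntegral

section Growth

theorem one_add_pow_le_exp {ε x : ℝ} (hε : 0 < ε) (hx : 0 ≤ x) (n : ℕ) :
    (1 + x) ^ n ≤ n.factorial / ε ^ n * Real.exp ε * Real.exp (ε * x) := by
  have h := Real.pow_div_factorial_le_exp (ε * (1 + x)) (by positivity) n
  rw [div_le_iff₀ (by positivity), mul_pow] at h
  rw [mul_assoc, ← Real.exp_add, div_mul_eq_mul_div, le_div_iff₀ (by positivity)]
  calc (1 + x) ^ n * ε ^ n = ε ^ n * (1 + x) ^ n := mul_comm _ _
    _ ≤ Real.exp (ε * (1 + x)) * n.factorial := h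
    _ = n.factorial * Real.exp (ε + ε * x) := by ring_nf

theorem norm_cpow_le_of_re_nonneg {w : ℂ} (hre : 0 ≤ w.re) {n : ℕ} (hw : ‖w‖ ≤ n) (s : ℂ) :
    ‖s ^ w‖ ≤ Real.exp (Real.pi * n) * (1 + ‖s‖) ^ n := by
  have hmod : ‖s‖ ^ w.re ≤ (1 + ‖s‖) ^ n := by
    rw [← Real.rpow_natCast]
    calc ‖s‖ ^ w.re ≤ (1 + ‖s‖) ^ w.re := by gcongr; linarith
      _ ≤ (1 + ‖s‖) ^ (n : ℝ) := by
        gcongr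
        · linarith [norm_nonneg s]
        · exact (Complex.re_le_norm w).trans hw
  have harg : -(s.arg * w.im) ≤ Real.pi * n := by
    refine (neg_le_abs _).trans ?_
    rw [abs_mul]
    gcongr
    exacts [Complex.abs_arg_le_pi s, (Complex.abs_im_le_norm w).trans hw]
  calc ‖s ^ w‖ ≤ ‖s‖ ^ w.re / Real.exp (s.arg * w.im) := Complex.norm_cpow_le s w
    _ = Real.exp (-(s.arg * w.im)) * ‖s‖ ^ w.re := by rw [Real.exp_neg, div_eq_inv_mul]
    _ ≤ Real.exp (Real.pi * n) * (1 + ‖s‖) ^ n := by gcongr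

theorem norm_cpow_le_of_le_norm {ε : ℝ} (hε : 0 < ε) {w : ℂ} {n : ℕ} (hw : ‖w‖ ≤ n) {s : ℂ}
    (hs : ε ≤ ‖s‖) :
    ‖s ^ w‖ ≤ Real.exp (Real.pi * (2 * n : ℕ)) / ε ^ n * (1 + ‖s‖) ^ (2 * n) := by
  have hs0 : s ≠ 0 := norm_pos_iff.1 (hε.trans_le hs)
  have hre : 0 ≤ (w + n).re := by
    rw [Complex.add_re, Complex.natCast_re]
    linarith [Complex.re_le_norm (-w), norm_neg w, Complex.neg_re w]
  have hnorm : ‖w + n‖ ≤ (2 * n : ℕ) := by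
    push_cast
    linarith [norm_add_le w n, Complex.norm_natCast n]
  calc ‖s ^ w‖ = ‖s ^ (w + n)‖ / ‖s‖ ^ n := by
        rw [Complex.cpow_add _ _ hs0, Complex.cpow_natCast, norm_mul, norm_pow,
          mul_div_cancel_right₀ _ (pow_ne_zero _ (norm_ne_zero_iff.2 hs0))]
    _ ≤ Real.exp (Real.pi * (2 * n : ℕ)) * (1 + ‖s‖) ^ (2 * n) / ε ^ n := by
        gcongr
        exact norm_cpow_le_of_re_nonneg hre hnorm s
    _ = _ := by ring

theorem exists_norm_cpow_le_exp {ε : ℝ} (hε : 0 < ε) (N : ℝ) :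
    ∃ C, ∀ w : ℂ, ‖w‖ ≤ N → ∀ s : ℂ, ε ≤ ‖s‖ → ‖s ^ w‖ ≤ C * Real.exp (ε * ‖s‖) := by
  obtain ⟨n, hn⟩ := exists_nat_ge N
  refine ⟨Real.exp (Real.pi * (2 * n : ℕ)) / ε ^ n *
    ((2 * n).factorial / ε ^ (2 * n) * Real.exp ε), fun w hw s hs ↦ ?_⟩
  rw [mul_assoc]
  refine (norm_cpow_le_of_le_norm hε (hw.trans hn) hs).trans ?_
  gcongr
  exact one_add_pow_le_exp hε (norm_nonneg s) (2 * n)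

/-- Subexponential growth of `g` at infinity in `sector κ`, without any condition at `0`. The two
roles of `ε` may be merged because both requirements become weaker when `ε` increases. -/
def HasSubexpGrowth (κ : ℝ) (g : ℂ → ℂ) : Prop :=
  ∀ ε > 0, ∃ C, ∀ s ∈ sector κ, ε ≤ ‖s‖ → ‖g s‖ ≤ C * Real.exp (ε * ‖s‖)

variable {κ : ℝ}

theorem hasSubexpGrowth_cpow (w : ℂ) : HasSubexpGrowth κ (· ^ w) := fun _ε hε ↦
  let ⟨C, hC⟩ := exists_norm_cpow_le_exp hε ‖w‖
  ⟨C, fun s _ hs ↦ hC w le_rfl s hs⟩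

theorem hasSubexpGrowth_of_norm_le {g : ℂ → ℂ} {C : ℝ} (hg : ∀ s ∈ sector κ, ‖g s‖ ≤ C) :
    HasSubexpGrowth κ g := fun ε _ ↦ ⟨C, fun s hs _ ↦ (hg s hs).trans <| le_mul_of_one_le_right
    ((norm_nonneg _).trans (hg s hs)) (Real.one_le_exp (by positivity))⟩

theorem HasSubexpGrowth.congr {g₁ g₂ : ℂ → ℂ} (hg : HasSubexpGrowth κ g₁)
    (h : EqOn g₁ g₂ (sector κ)) : HasSubexpGrowth κ g₂ := fun ε hε ↦
  let ⟨C, hC⟩ := hg ε hε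
  ⟨C, fun s hs hεs ↦ h hs ▸ hC s hs hεs⟩

theorem HasSubexpGrowth.const_mul {g : ℂ → ℂ} (hg : HasSubexpGrowth κ g) (c : ℂ) :
    HasSubexpGrowth κ fun s ↦ c * g s := fun ε hε ↦
  let ⟨C, hC⟩ := hg ε hε
  ⟨‖c‖ * C, fun s hs hεs ↦ by rw [norm_mul, mul_assoc]; gcongr; exact hC s hs hεs⟩

theorem HasSubexpGrowth.sub {g₁ g₂ : ℂ → ℂ} (hg₁ : HasSubexpGrowth κ g₁)
    (hg₂ : HasSubexpGrowth κ g₂) : HasSubexpGrowth κ fun s ↦ g₁ s - g₂ s := fun ε hε ↦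
  let ⟨C₁, hC₁⟩ := hg₁ ε hε
  let ⟨C₂, hC₂⟩ := hg₂ ε hε
  ⟨C₁ + C₂, fun s hs hεs ↦ (norm_sub_le _ _).trans <| by
    rw [add_mul]; exact add_le_add (hC₁ s hs hεs) (hC₂ s hs hεs)⟩

end Growth

section Ray

/-- The integral of `exp s * g s` over the ray `{a + r ζ | 0 < r}`, oriented away from `a`. -/
noncomputable def rayIntegral (a ζ : ℂ) (g : ℂ → ℂ) : ℂ :=
  ∫ r : ℝ in Ioi 0, ζ * (Complex.exp (a + r * ζ) * g (a + r * ζ))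

variable {κ : ℝ} {a ζ : ℂ} {g : ℂ → ℂ}

theorem norm_exp_mul_le {ε C r : ℝ} {x : ℂ} (hε : 0 ≤ ε) (hr : 0 ≤ r)
    (hx : ‖x‖ ≤ C * Real.exp (ε * ‖a + r * ζ‖)) :
    ‖Complex.exp (a + r * ζ) * x‖ ≤
      C * Real.exp ((1 + ε) * ‖a‖) * Real.exp ((ζ.re + ε * ‖ζ‖) * r) := by
  have hC : 0 ≤ C := nonneg_of_mul_nonneg_left ((norm_nonneg x).trans hx) (Real.exp_pos _)
  have hnorm : ‖a + r * ζ‖ ≤ ‖a‖ + r * ‖ζ‖ := by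
    simpa [abs_of_nonneg hr] using norm_add_le a (r * ζ)
  have hexp : (a + r * ζ).re + ε * ‖a + r * ζ‖ ≤
      (1 + ε) * ‖a‖ + (ζ.re + ε * ‖ζ‖) * r := by
    rw [Complex.add_re, Complex.re_ofReal_mul]
    linarith [Complex.re_le_norm a, mul_le_mul_of_nonneg_left hnorm hε]
  calc ‖Complex.exp (a + r * ζ) * x‖
      ≤ Real.exp (a + r * ζ).re * (C * Real.exp (ε * ‖a + r * ζ‖)) := by
        rw [norm_mul, Complex.norm_exp]
        gcongr
    _ = C * Real.exp ((a + r * ζ).re + ε * ‖a + r * ζ‖) := by rw [Real.exp_add]; ring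
    _ ≤ C * Real.exp ((1 + ε) * ‖a‖ + (ζ.re + ε * ‖ζ‖) * r) := by gcongr
    _ = _ := by rw [Real.exp_add, mul_assoc]

theorem exists_pos_re_add_mul_norm_neg (hre : ζ.re < 0) :
    ∃ ε > 0, ζ.re + ε * ‖ζ‖ < 0 := by
  have hζ : 0 < ‖ζ‖ := norm_pos_iff.2 fun h ↦ by simp [h] at hre
  refine ⟨-ζ.re / (2 * ‖ζ‖), by have := neg_pos.2 hre; positivity, ?_⟩
  rw [div_mul_eq_mul_div, mul_div_mul_right _ _ hζ.ne']
  linarith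

theorem eventually_le_norm_add_ofReal_mul (hκ : 0 ≤ κ) (ha : a ∈ sector (-κ)) :
    ∃ ε > 0, ∀ᶠ b in 𝓝 a, ∀ ζ ∈ sector κ, ∀ r : ℝ, 0 < r → ε ≤ ‖b + r * ζ‖ := by
  have hpos : 0 < (a.re - κ * ‖a‖) / (1 + κ) :=
    div_pos (by linarith [mem_sector.1 ha]) (by linarith)
  refine ⟨_, half_pos hpos, ?_⟩
  have hcont : ContinuousAt (fun b : ℂ ↦ (b.re - κ * ‖b‖) / (1 + κ)) a := by fun_prop
  filter_upwards [hcont.eventually_const_lt (half_lt_self hpos)] with b hb ζ hζ r hr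
  refine hb.le.trans ?_
  simpa [add_comm] using le_norm_sub_of_mem_sector hκ (ofReal_mul_mem_sector hζ hr) (-b)

theorem exists_pos_decay_and_eventually_le_norm_ray (hκ : 0 ≤ κ) (ha : a ∈ sector (-κ))
    (hre : ζ.re < 0) :
    ∃ ε > 0, ζ.re + ε * ‖ζ‖ < 0 ∧
      ∀ᶠ b in 𝓝 a, ∀ ξ ∈ sector κ, ∀ r : ℝ, 0 < r → ε ≤ ‖b + r * ξ‖ := by
  obtain ⟨ε₁, hε₁, hnear⟩ := eventually_le_norm_add_ofReal_mul hκ ha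
  obtain ⟨ε₂, hε₂, hdecay⟩ := exists_pos_re_add_mul_norm_neg hre
  refine ⟨min ε₁ ε₂, lt_min hε₁ hε₂,
    hdecay.trans_le' (by gcongr; exact min_le_right _ _), ?_⟩
  filter_upwards [hnear] with b hb ξ hξ r hr using (min_le_left _ _).trans (hb ξ hξ r hr)

theorem eventually_norm_ray_le_exp (hκ : 0 ≤ κ) (hg : HasSubexpGrowth κ g) (ha : a ∈ sector (-κ))
    (hζ : ζ ∈ sector κ) (hre : ζ.re < 0) :
    ∃ C, ∃ c < 0, ∀ᶠ b in 𝓝 a, ∀ r : ℝ, 0 < r →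
      ‖Complex.exp (b + r * ζ) * g (b + r * ζ)‖ ≤ C * Real.exp (c * r) := by
  obtain ⟨ε, hε, hdecay, hnear⟩ := exists_pos_decay_and_eventually_le_norm_ray hκ ha hre
  obtain ⟨C, hC⟩ := hg ε hε
  refine ⟨C * Real.exp ((1 + ε) * (‖a‖ + 1)), ζ.re + ε * ‖ζ‖, hdecay, ?_⟩
  filter_upwards [hnear, isOpen_sector.mem_nhds ha,
    continuous_norm.continuousAt.eventually_lt_const (lt_add_one ‖a‖)] with b hb hbκ hbnorm r hr
  have hgr := hC _ (add_ofReal_mul_mem_sector hκ hbκ hζ hr.le) (hb ζ hζ r hr)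
  have hC0 : 0 ≤ C := nonneg_of_mul_nonneg_left ((norm_nonneg _).trans hgr) (Real.exp_pos _)
  refine (norm_exp_mul_le hε.le hr.le hgr).trans ?_
  gcongr

theorem aestronglyMeasurable_ray (hκ : 0 ≤ κ) (hg : ContinuousOn g (sector κ))
    (ha : a ∈ sector (-κ)) (hζ : ζ ∈ sector κ) :
    AEStronglyMeasurable (fun r : ℝ ↦ ζ * (Complex.exp (a + r * ζ) * g (a + r * ζ)))
      (volume.restrict (Ioi 0)) := by
  have hmaps : MapsTo (fun r : ℝ ↦ a + r * ζ) (Ioi 0) (sector κ) :=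
    fun r hr ↦ add_ofReal_mul_mem_sector hκ ha hζ (le_of_lt hr)
  exact (continuousOn_const.mul ((Continuous.continuousOn (by fun_prop)).mul
    (hg.comp (by fun_prop) hmaps))).aestronglyMeasurable measurableSet_Ioi

theorem integrableOn_ray (hκ : 0 ≤ κ) (hcont : ContinuousOn g (sector κ))
    (hg : HasSubexpGrowth κ g) (ha : a ∈ sector (-κ)) (hζ : ζ ∈ sector κ) (hre : ζ.re < 0) :
    IntegrableOn (fun r : ℝ ↦ ζ * (Complex.exp (a + r * ζ) * g (a + r * ζ))) (Ioi 0) := by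
  obtain ⟨C, c, hc, hbound⟩ := eventually_norm_ray_le_exp hκ hg ha hζ hre
  refine (((integrableOn_exp_mul_Ioi hc 0).const_mul C).const_mul ‖ζ‖).mono'
    (aestronglyMeasurable_ray hκ hcont ha hζ) ?_
  filter_upwards [ae_restrict_mem measurableSet_Ioi] with r hr
  rw [norm_mul]
  gcongr
  exact hbound.self_of_nhds r hr

theorem integral_Ioi_deriv_ray {f : ℂ → ℂ}
    (hf : ∀ r : ℝ, 0 ≤ r → DifferentiableAt ℂ f (a + r * ζ))
    (hint : IntegrableOn (fun r : ℝ ↦ ζ * deriv f (a + r * ζ)) (Ioi 0))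
    (hlim : Tendsto (fun r : ℝ ↦ f (a + r * ζ)) atTop (𝓝 0)) :
    ∫ r : ℝ in Ioi 0, ζ * deriv f (a + r * ζ) = -f a := by
  have hderiv (r : ℝ) (hr : r ∈ Ici 0) :
      HasDerivAt (fun r : ℝ ↦ f (a + r * ζ)) (ζ * deriv f (a + r * ζ)) r := by
    have hline : HasDerivAt (fun z : ℂ ↦ a + z * ζ) ζ r := by
      simpa using ((hasDerivAt_id (r : ℂ)).mul_const ζ).const_add a
    simpa [mul_comm] using ((hf r hr).hasDerivAt.comp (r : ℂ) hline).comp_ofReal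
  simpa using integral_Ioi_of_hasDerivAt_of_tendsto' hderiv hint hlim

theorem hasDerivAt_rayIntegral (hκ : 0 ≤ κ) (hdiff : DifferentiableOn ℂ g (sector κ))
    (hg : HasSubexpGrowth κ g) (ha : a ∈ sector (-κ)) (hζ : ζ ∈ sector κ) (hre : ζ.re < 0) :
    HasDerivAt (fun b ↦ rayIntegral b ζ g) (-(Complex.exp a * g a)) a := by
  obtain ⟨C, c, hc, hbound⟩ := eventually_norm_ray_le_exp hκ hg ha hζ hre
  have hexp := ((integrableOn_exp_mul_Ioi hc 0).const_mul C).const_mul ‖ζ‖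
  let f : ℂ → ℂ := fun s ↦ Complex.exp s * g s
  have hf {b : ℂ} (hb : b ∈ sector (-κ)) {r : ℝ} (hr : 0 ≤ r) :
      DifferentiableAt ℂ f (b + r * ζ) :=
    Complex.differentiableAt_exp.mul
      (hdiff.differentiableAt (isOpen_sector.mem_nhds (add_ofReal_mul_mem_sector hκ hb hζ hr)))
  obtain ⟨hint, hder⟩ := hasDerivAt_integral_of_differentiableOn
    (μ := volume.restrict (Ioi (0 : ℝ))) (F := fun b r ↦ ζ * f (b + r * ζ))
    (inter_mem (isOpen_sector.mem_nhds ha) hbound)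
    (fun b hb ↦ aestronglyMeasurable_ray hκ hdiff.continuousOn hb.1 hζ)
    (ae_restrict_of_forall_mem measurableSet_Ioi fun r hr b hb ↦ ((differentiableAt_comp_add_const.2
      (hf hb.1 (le_of_lt hr))).const_mul ζ).differentiableWithinAt)
    (ae_restrict_of_forall_mem measurableSet_Ioi fun r hr b hb ↦ by
      rw [norm_mul]
      gcongr
      exact hb.2 r hr) hexp
  simp only [deriv_const_mul_field, deriv_comp_add_const] at hint hder
  have hlim : Tendsto (fun r : ℝ ↦ f (a + r * ζ)) atTop (𝓝 0) := by
    refine squeeze_zero_norm' (a := fun r ↦ C * Real.exp (c * r)) ?_ ?_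
    · filter_upwards [eventually_gt_atTop 0] with r hr using hbound.self_of_nhds r hr
    · simpa using (Real.tendsto_exp_atBot.comp
        (tendsto_id.const_mul_atTop_of_neg hc)).const_mul C
  rwa [integral_Ioi_deriv_ray (fun r ↦ hf ha) hint hlim] at hder

end Ray

section HankelFormula

theorem ofReal_mul_cpow {r : ℝ} (hr : 0 < r) {z : ℂ} (hz : z ≠ 0) (w : ℂ) :
    (r * z : ℂ) ^ w = (r : ℂ) ^ w * z ^ w := by
  have hr0 : (r : ℂ) ≠ 0 := by exact_mod_cast hr.ne'
  rw [Complex.cpow_def_of_ne_zero (mul_ne_zero hr0 hz), Complex.cpow_def_of_ne_zero hr0,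
    Complex.cpow_def_of_ne_zero hz, Complex.log_ofReal_mul hr hz, ← Complex.exp_add,
    Complex.ofReal_log hr.le, add_mul]

theorem cpow_mul_neg_cpow_neg_of_im_pos {ζ : ℂ} (him : 0 < ζ.im) (w : ℂ) :
    ζ ^ w * (-ζ) ^ (-w) = Complex.exp (Real.pi * w * Complex.I) := by
  have hζ : ζ ≠ 0 := fun h ↦ by simp [h] at him
  rw [Complex.cpow_def_of_ne_zero hζ, Complex.cpow_def_of_ne_zero (neg_ne_zero.2 hζ),
    ← Complex.exp_add, Complex.log, Complex.log, norm_neg,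
    Complex.arg_neg_eq_arg_sub_pi_of_im_pos him]
  push_cast
  ring_nf

theorem cpow_mul_neg_cpow_neg_of_im_neg {ζ : ℂ} (him : ζ.im < 0) (w : ℂ) :
    ζ ^ w * (-ζ) ^ (-w) = Complex.exp (-(Real.pi * w * Complex.I)) := by
  have h := cpow_mul_neg_cpow_neg_of_im_pos (ζ := -ζ) (by simpa using him) (-w)
  rw [neg_neg, neg_neg, mul_comm] at h
  rw [h]
  ring_nf

/-- The integral `(2πi)⁻¹ ∫ exp s * g s ds` over the Hankel contour coming from infinity in the
direction `conj ζ`, turning at the vertex `a` and returning to infinity in the direction `ζ`. -/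
noncomputable def hankelIntegral (ζ a : ℂ) (g : ℂ → ℂ) : ℂ :=
  (2 * Real.pi * Complex.I)⁻¹ * (rayIntegral a ζ g - rayIntegral a (conj ζ) g)

variable {κ : ℝ} {a ζ w : ℂ} {g : ℂ → ℂ}

theorem hankelIntegral_eq_of_mem_sector (hκ : 0 ≤ κ) (hdiff : DifferentiableOn ℂ g (sector κ))
    (hg : HasSubexpGrowth κ g) (hζ : ζ ∈ sector κ) (hre : ζ.re < 0) {b : ℂ}
    (ha : a ∈ sector (-κ)) (hb : b ∈ sector (-κ)) :
    hankelIntegral ζ a g = hankelIntegral ζ b g := by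
  have hderiv (c : ℂ) (hc : c ∈ sector (-κ)) : HasDerivAt (hankelIntegral ζ · g) 0 c := by
    have h := ((hasDerivAt_rayIntegral hκ hdiff hg hc hζ hre).sub (hasDerivAt_rayIntegral hκ hdiff
      hg hc (conj_mem_sector hζ) (by simpa))).const_mul (2 * Real.pi * Complex.I)⁻¹
    rwa [sub_self, mul_zero] at h
  exact isOpen_sector.is_const_of_deriv_eq_zero (convex_sector_neg hκ).isPreconnected
    (fun c hc ↦ (hderiv c hc).differentiableAt.differentiableWithinAt)
    (fun c hc ↦ (hderiv c hc).deriv) ha hb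

theorem differentiableOn_cpow_sector (hκ : κ ≤ 1) (w : ℂ) :
    DifferentiableOn ℂ (· ^ w) (sector κ) := fun _s hs ↦
  (differentiableAt_id.cpow_const (sector_subset_slitPlane hκ hs)).differentiableWithinAt

theorem rayIntegral_zero_cpow (hw : -1 < w.re) (hre : ζ.re < 0) :
    rayIntegral 0 ζ (· ^ w) =
      ζ ^ (w + 1) * (-ζ) ^ (-(w + 1)) * Complex.Gamma (w + 1) := by
  have hζ : ζ ≠ 0 := fun h ↦ by simp [h] at hre
  rw [rayIntegral, mul_assoc, ← integral_cpow_mul_exp_neg_mul_Ioi_of_re_pos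
    (by simpa using by linarith) (by simpa using hre), ← integral_const_mul]
  refine setIntegral_congr_fun measurableSet_Ioi fun r hr ↦ ?_
  simp only [zero_add, neg_mul, neg_neg, add_sub_cancel_right]
  rw [ofReal_mul_cpow hr hζ, Complex.cpow_add _ _ hζ, Complex.cpow_one]
  ring_nf

theorem hankelIntegral_zero_cpow_neg (hw : w.re < 1) (hre : ζ.re < 0) (him : 0 < ζ.im) :
    hankelIntegral ζ 0 (· ^ (-w)) = (Complex.Gamma w)⁻¹ := by
  have hsin : Complex.exp (Real.pi * (-w + 1) * Complex.I) -
      Complex.exp (-(Real.pi * (-w + 1) * Complex.I)) =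
        2 * Complex.I * Complex.sin (Real.pi * w) := by
    have h : Complex.sin (Real.pi * w) = Complex.sin (Real.pi * (-w + 1)) := by
      rw [← Complex.sin_pi_sub]
      ring_nf
    rw [h, Complex.sin]
    ring_nf
    rw [Complex.I_sq]
    ring_nf
  rw [hankelIntegral, rayIntegral_zero_cpow (by simpa using hw) hre,
    rayIntegral_zero_cpow (by simpa using hw) (by simpa),
    cpow_mul_neg_cpow_neg_of_im_pos him,
    cpow_mul_neg_cpow_neg_of_im_neg (by simpa), ← sub_mul, hsin, neg_add_eq_sub]
  have hrefl := Complex.Gamma_mul_Gamma_one_sub w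
  have hΓ : Complex.Gamma (1 - w) ≠ 0 := Complex.Gamma_ne_zero_of_re_pos (by simpa using hw)
  have hπ : (Real.pi : ℂ) ≠ 0 := by exact_mod_cast Real.pi_ne_zero
  by_cases hzero : Complex.sin (Real.pi * w) = 0
  · have hΓw : Complex.Gamma w = 0 := by simpa [hzero, hΓ] using hrefl
    simp [hzero, hΓw]
  · rw [eq_div_iff hzero] at hrefl
    refine eq_inv_of_mul_eq_one_left ?_
    field_simp
    linear_combination hrefl

theorem tendsto_rayIntegral_cpow_nhdsGT_zero (hκ0 : 0 ≤ κ) (hκ1 : κ < 1) (hw : 0 ≤ w.re)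
    (hζ : ζ ∈ sector κ) (hre : ζ.re < 0) :
    Tendsto (fun x : ℝ ↦ rayIntegral x ζ (· ^ w)) (𝓝[>] 0) (𝓝 (rayIntegral 0 ζ (· ^ w))) := by
  obtain ⟨ε, hε, hdecay⟩ := exists_pos_re_add_mul_norm_neg hre
  obtain ⟨n, hn⟩ := exists_nat_ge ‖w‖
  set C := Real.exp (Real.pi * n) * (n.factorial / ε ^ n * Real.exp ε)
  have hbound (s : ℂ) : ‖s ^ w‖ ≤ C * Real.exp (ε * ‖s‖) := by
    refine (norm_cpow_le_of_re_nonneg hw hn s).trans ?_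
    rw [mul_assoc]
    gcongr
    exact one_add_pow_le_exp hε (norm_nonneg s) n
  refine tendsto_integral_filter_of_dominated_convergence
    (fun r ↦ ‖ζ‖ * (C * Real.exp ((1 + ε) * 1) * Real.exp ((ζ.re + ε * ‖ζ‖) * r))) ?_ ?_
    (((integrableOn_exp_mul_Ioi hdecay 0).const_mul _).const_mul _) ?_
  · filter_upwards [self_mem_nhdsWithin] with x hx
    refine aestronglyMeasurable_ray (g := (· ^ w)) hκ0 ?_ (ofReal_mem_sector (neg_lt_neg hκ1) hx) hζ
    exact (differentiableOn_cpow_sector hκ1.le w).continuousOn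
  · filter_upwards [Ioo_mem_nhdsGT one_pos] with x hx
    filter_upwards [ae_restrict_mem measurableSet_Ioi] with r hr
    rw [norm_mul]
    gcongr
    refine (norm_exp_mul_le hε.le (le_of_lt hr) (hbound _)).trans ?_
    gcongr
    simpa [abs_of_pos hx.1] using hx.2.le
  · filter_upwards [ae_restrict_mem measurableSet_Ioi] with r hr
    have hslit : (0 : ℂ) + r * ζ ∈ Complex.slitPlane := by
      simpa using sector_subset_slitPlane hκ1.le (ofReal_mul_mem_sector hζ hr)
    have hcpow : ContinuousAt (fun b : ℂ ↦ (b + r * ζ) ^ w) 0 :=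
      ContinuousAt.comp (f := (· + r * ζ)) (continuousAt_cpow_const hslit) (by fun_prop)
    have hcont : ContinuousAt (fun b : ℂ ↦ ζ * (Complex.exp (b + r * ζ) * (b + r * ζ) ^ w)) 0 :=
      continuousAt_const.mul (ContinuousAt.mul (by fun_prop) hcpow)
    exact hcont.tendsto.comp
      (Complex.continuous_ofReal.tendsto' 0 0 rfl |>.mono_left nhdsWithin_le_nhds)

theorem differentiable_rayIntegral_cpow (hκ0 : 0 ≤ κ) (hκ1 : κ < 1) (ha : a ∈ sector (-κ))
    (hζ : ζ ∈ sector κ) (hre : ζ.re < 0) :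
    Differentiable ℂ fun w : ℂ ↦ rayIntegral a ζ (· ^ w) := by
  intro w
  obtain ⟨ε, hε, hdecay, hnear⟩ := exists_pos_decay_and_eventually_le_norm_ray hκ0 ha hre
  obtain ⟨C, hC⟩ := exists_norm_cpow_le_exp hε (‖w‖ + 1)
  refine (hasDerivAt_integral_of_differentiableOn (Metric.ball_mem_nhds w one_pos)
    (fun v _ ↦ aestronglyMeasurable_ray hκ0 (differentiableOn_cpow_sector hκ1.le v).continuousOn
      ha hζ) ?_ ?_
    (((integrableOn_exp_mul_Ioi hdecay 0).const_mul
      (C * Real.exp ((1 + ε) * ‖a‖))).const_mul ‖ζ‖)).2.differentiableAt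
  · refine ae_restrict_of_forall_mem measurableSet_Ioi fun r hr v _ ↦ ?_
    have hne : a + r * ζ ≠ 0 :=
      ne_zero_of_mem_sector (add_ofReal_mul_mem_sector hκ0 ha hζ (le_of_lt hr))
    exact (((differentiableAt_id.const_cpow (.inl hne)).const_mul _).const_mul
      _).differentiableWithinAt
  · refine ae_restrict_of_forall_mem measurableSet_Ioi fun r hr v hv ↦ ?_
    have hv : ‖v‖ ≤ ‖w‖ + 1 := by
      linarith [norm_le_norm_add_norm_sub' v w, mem_ball_iff_norm.1 hv]
    rw [norm_mul]
    gcongr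
    exact norm_exp_mul_le hε.le (le_of_lt hr)
      (hC v hv _ (hnear.self_of_nhds ζ hζ r hr))

theorem hankelIntegral_cpow_neg_of_re_nonpos (hκ0 : 0 ≤ κ) (hκ1 : κ < 1) (ha : a ∈ sector (-κ))
    (hζ : ζ ∈ sector κ) (hre : ζ.re < 0) (him : 0 < ζ.im) (hw : w.re ≤ 0) :
    hankelIntegral ζ a (· ^ (-w)) = (Complex.Gamma w)⁻¹ := by
  have hlim : Tendsto (fun x : ℝ ↦ hankelIntegral ζ x (· ^ (-w))) (𝓝[>] 0)
      (𝓝 (hankelIntegral ζ 0 (· ^ (-w)))) :=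
    ((tendsto_rayIntegral_cpow_nhdsGT_zero hκ0 hκ1 (by simpa) hζ hre).sub
      (tendsto_rayIntegral_cpow_nhdsGT_zero hκ0 hκ1 (by simpa) (conj_mem_sector hζ)
        (by simpa))).const_mul _
  rw [← hankelIntegral_zero_cpow_neg (by linarith) hre him]
  refine tendsto_nhds_unique (tendsto_const_nhds.congr' ?_) hlim
  filter_upwards [self_mem_nhdsWithin] with x hx
  exact hankelIntegral_eq_of_mem_sector hκ0 (differentiableOn_cpow_sector hκ1.le (-w))
    (hasSubexpGrowth_cpow (-w)) hζ hre ha (ofReal_mem_sector (neg_lt_neg hκ1) hx)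

theorem hankelIntegral_cpow_neg (hκ0 : 0 ≤ κ) (hκ1 : κ < 1) (ha : a ∈ sector (-κ))
    (hζ : ζ ∈ sector κ) (hre : ζ.re < 0) (him : 0 < ζ.im) (w : ℂ) :
    hankelIntegral ζ a (· ^ (-w)) = (Complex.Gamma w)⁻¹ := by
  have hleft : Differentiable ℂ fun w : ℂ ↦ hankelIntegral ζ a (· ^ (-w)) :=
    (((differentiable_rayIntegral_cpow hκ0 hκ1 ha hζ hre).sub
      (differentiable_rayIntegral_cpow hκ0 hκ1 ha (conj_mem_sector hζ) (by simpa))).const_mul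
        _).comp differentiable_neg
  have heq : (fun w : ℂ ↦ hankelIntegral ζ a (· ^ (-w))) =ᶠ[𝓝 (-1)]
      fun w ↦ (Complex.Gamma w)⁻¹ := by
    filter_upwards [(isOpen_lt Complex.continuous_re continuous_const).mem_nhds
      (show (-1 : ℂ).re < 0 by simp)] with w hw
    exact hankelIntegral_cpow_neg_of_re_nonpos hκ0 hκ1 ha hζ hre him (le_of_lt hw)
  exact congrFun (AnalyticOnNhd.eq_of_eventuallyEq (fun z _ ↦ hleft.analyticAt z)
    (fun z _ ↦ Complex.differentiable_one_div_Gamma.analyticAt z) heq) w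

end HankelFormula

section HankelBounds

variable {κ : ℝ} {a ζ : ℂ} {g g₁ g₂ : ℂ → ℂ}

theorem hankelIntegral_const_mul (c : ℂ) :
    hankelIntegral ζ a (fun s ↦ c * g s) = c * hankelIntegral ζ a g := by
  have hray (ξ : ℂ) : rayIntegral a ξ (fun s ↦ c * g s) = c * rayIntegral a ξ g := by
    simp only [rayIntegral, mul_left_comm _ c, integral_const_mul]
  rw [hankelIntegral, hray, hray, hankelIntegral]
  ring

theorem hankelIntegral_sub (hκ : 0 ≤ κ) (hcont₁ : ContinuousOn g₁ (sector κ))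
    (hg₁ : HasSubexpGrowth κ g₁) (hcont₂ : ContinuousOn g₂ (sector κ))
    (hg₂ : HasSubexpGrowth κ g₂) (ha : a ∈ sector (-κ)) (hζ : ζ ∈ sector κ) (hre : ζ.re < 0) :
    hankelIntegral ζ a (fun s ↦ g₁ s - g₂ s) = hankelIntegral ζ a g₁ - hankelIntegral ζ a g₂ := by
  have hray {ξ : ℂ} (hξ : ξ ∈ sector κ) (hξre : ξ.re < 0) :
      rayIntegral a ξ (fun s ↦ g₁ s - g₂ s) = rayIntegral a ξ g₁ - rayIntegral a ξ g₂ := by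
    simp only [rayIntegral, mul_sub]
    exact integral_sub (integrableOn_ray hκ hcont₁ hg₁ ha hξ hξre)
      (integrableOn_ray hκ hcont₂ hg₂ ha hξ hξre)
  simp only [hankelIntegral, hray hζ hre, hray (conj_mem_sector hζ) (by simpa)]
  ring

theorem hankelIntegral_congr (hκ : 0 ≤ κ) (ha : a ∈ sector (-κ)) (hζ : ζ ∈ sector κ)
    (h : EqOn g₁ g₂ (sector κ)) : hankelIntegral ζ a g₁ = hankelIntegral ζ a g₂ := by
  have hray {ξ : ℂ} (hξ : ξ ∈ sector κ) : rayIntegral a ξ g₁ = rayIntegral a ξ g₂ :=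
    setIntegral_congr_fun measurableSet_Ioi fun r hr ↦ by
      simp only [h (add_ofReal_mul_mem_sector hκ ha hξ (le_of_lt hr))]
  rw [hankelIntegral, hray hζ, hray (conj_mem_sector hζ), hankelIntegral]

theorem norm_rayIntegral_le {ε A : ℝ} (hε : 0 ≤ ε) (hdecay : ζ.re + ε * ‖ζ‖ < 0)
    (hg : ∀ r : ℝ, 0 < r → ‖g (a + r * ζ)‖ ≤ A * Real.exp (ε * ‖a + r * ζ‖)) :
    ‖rayIntegral a ζ g‖ ≤
      ‖ζ‖ * Real.exp ((1 + ε) * ‖a‖) / -(ζ.re + ε * ‖ζ‖) * A := by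
  have hint := ((integrableOn_exp_mul_Ioi hdecay 0).const_mul
    (A * Real.exp ((1 + ε) * ‖a‖))).const_mul ‖ζ‖
  refine (norm_integral_le_of_norm_le hint ?_).trans_eq ?_
  · refine ae_restrict_of_forall_mem measurableSet_Ioi fun r hr ↦ ?_
    rw [norm_mul]
    gcongr
    exact norm_exp_mul_le hε (le_of_lt hr) (hg r hr)
  · rw [integral_const_mul, integral_const_mul, integral_exp_mul_Ioi hdecay, mul_zero,
      Real.exp_zero, neg_div, ← div_neg]
    ring

theorem exists_norm_hankelIntegral_le (hκ : 0 ≤ κ) (ha : a ∈ sector (-κ)) (hζ : ζ ∈ sector κ)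
    (hre : ζ.re < 0) :
    ∃ C, 0 ≤ C ∧ ∃ ε > 0, ∀ (g : ℂ → ℂ) (A : ℝ),
      (∀ s ∈ sector κ, ε ≤ ‖s‖ → ‖g s‖ ≤ A * Real.exp (ε * ‖s‖)) →
        ‖hankelIntegral ζ a g‖ ≤ C * A := by
  obtain ⟨ε, hε, hdecay, hnear⟩ := exists_pos_decay_and_eventually_le_norm_ray hκ ha hre
  set M := ‖ζ‖ * Real.exp ((1 + ε) * ‖a‖) / -(ζ.re + ε * ‖ζ‖)
  have hM : 0 ≤ M := div_nonneg (by positivity) (by linarith)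
  refine ⟨‖(2 * Real.pi * Complex.I)⁻¹‖ * (M + M), by positivity, ε, hε, fun g A hg ↦ ?_⟩
  have hray {ξ : ℂ} (hξ : ξ ∈ sector κ) (r : ℝ) (hr : 0 < r) :
      ‖g (a + r * ξ)‖ ≤ A * Real.exp (ε * ‖a + r * ξ‖) :=
    hg _ (add_ofReal_mul_mem_sector hκ ha hξ hr.le) (hnear.self_of_nhds ξ hξ r hr)
  have hupper : ‖rayIntegral a ζ g‖ ≤ M * A := norm_rayIntegral_le hε.le hdecay (hray hζ)
  have hlower : ‖rayIntegral a (conj ζ) g‖ ≤ M * A := by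
    have h := norm_rayIntegral_le (ζ := conj ζ) hε.le (by simpa) (hray (conj_mem_sector hζ))
    rwa [Complex.norm_conj, Complex.conj_re] at h
  rw [hankelIntegral, norm_mul, mul_assoc ‖_‖, add_mul]
  gcongr
  exact (norm_sub_le _ _).trans (add_le_add hupper hlower)

theorem hasSum_hankelIntegral {G : ℕ → ℂ → ℂ} {b : ℕ → ℝ} (hκ : 0 ≤ κ) (ha : a ∈ sector (-κ))
    (hζ : ζ ∈ sector κ) (hre : ζ.re < 0) (hG : ∀ k, ContinuousOn (G k) (sector κ))
    (hb : Summable b)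
    (hbound : ∀ ξ ∈ sector κ, ∀ r : ℝ, 0 < r → ∀ k, ‖G k (a + r * ξ)‖ ≤ b k)
    (hsum : ∀ ξ ∈ sector κ, ∀ r : ℝ, 0 < r → HasSum (fun k ↦ G k (a + r * ξ)) (g (a + r * ξ))) :
    HasSum (fun k ↦ hankelIntegral ζ a (G k)) (hankelIntegral ζ a g) := by
  have hray {ξ : ℂ} (hξ : ξ ∈ sector κ) (hξre : ξ.re < 0) :
      HasSum (fun k ↦ rayIntegral a ξ (G k)) (rayIntegral a ξ g) := by
    refine hasSum_integral_of_dominated_convergence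
      (fun k r ↦ b k * (‖ξ‖ * Real.exp ‖a‖ * Real.exp (ξ.re * r)))
      (fun k ↦ aestronglyMeasurable_ray hκ (hG k) ha hξ) (fun k ↦ ?_)
      (.of_forall fun r ↦ hb.mul_right _) ?_
      (ae_restrict_of_forall_mem measurableSet_Ioi fun r hr ↦
        ((hsum ξ hξ r hr).mul_left _).mul_left _)
    · refine ae_restrict_of_forall_mem measurableSet_Ioi fun r hr ↦ ?_
      have h := norm_exp_mul_le (a := a) (ζ := ξ) (ε := 0) (C := b k) le_rfl (le_of_lt hr)
        (by simpa using hbound ξ hξ r hr k)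
      simp only [add_zero, one_mul, zero_mul] at h
      rw [norm_mul]
      refine (mul_le_mul_of_nonneg_left h (norm_nonneg ξ)).trans_eq ?_
      ring
    · simp only [tsum_mul_right]
      exact ((integrableOn_exp_mul_Ioi hξre 0).const_mul _).const_mul _
  exact ((hray hζ hre).sub (hray (conj_mem_sector hζ) (by simpa))).mul_left _

end HankelBounds

section MittagLeffler

variable {κ : ℝ} {a ζ z : ℂ} {ρ : ℝ}

theorem hasSum_pow_mul_inv_pow_succ {u : ℂ} (h : ‖z‖ < ‖u‖) :
    HasSum (fun k : ℕ ↦ z ^ k * (u ^ (k + 1))⁻¹) (u - z)⁻¹ := by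
  have hu : u ≠ 0 := norm_pos_iff.1 ((norm_nonneg z).trans_lt h)
  have hq : ‖z / u‖ < 1 := by rwa [norm_div, div_lt_one (norm_pos_iff.2 hu)]
  convert! (hasSum_geometric_of_norm_lt_one hq).mul_left u⁻¹ using 1
  · funext k
    rw [div_pow, pow_succ]
    field_simp
  · rw [← mul_inv, mul_sub, mul_one, mul_div_cancel₀ _ hu]

theorem inv_pow_cpow_succ (s w : ℂ) (k : ℕ) :
    ((s ^ w) ^ (k + 1))⁻¹ = s ^ (-(w * k + w)) := by
  rw [← Complex.cpow_mul_nat, Complex.cpow_neg]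
  push_cast
  ring_nf

theorem mittagLeffler2_eq_hankelIntegral_of_le_norm (hκ0 : 0 ≤ κ) (hκ1 : κ < 1)
    (ha : a ∈ sector (-κ)) (hζ : ζ ∈ sector κ) (hre : ζ.re < 0) (him : 0 < ζ.im)
    (hlarge : ∀ ξ ∈ sector κ, ∀ r : ℝ, 0 < r → ‖z‖ + 1 ≤ ‖(a + r * ξ) ^ (ρ : ℂ)‖) :
    mittagLeffler2 ρ z = hankelIntegral ζ a (fun s ↦ (s ^ (ρ : ℂ) - z)⁻¹) := by
  have hterm (k : ℕ) : z ^ k / Complex.Gamma (ρ * k + ρ) =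
      hankelIntegral ζ a (fun s ↦ z ^ k * s ^ (-(ρ * k + ρ : ℂ))) := by
    rw [hankelIntegral_const_mul, hankelIntegral_cpow_neg hκ0 hκ1 ha hζ hre him, div_eq_mul_inv]
  have hlt : ‖z‖ / (‖z‖ + 1) < 1 := (div_lt_one (by positivity)).2 (lt_add_one _)
  simp only [mittagLeffler2, hterm]
  refine (hasSum_hankelIntegral (G := fun k s ↦ z ^ k * s ^ (-(ρ * k + ρ : ℂ))) hκ0 ha hζ hre
    (fun k ↦ continuousOn_const.mul (differentiableOn_cpow_sector hκ1.le _).continuousOn)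
    (summable_geometric_of_lt_one (by positivity) hlt) (fun ξ hξ r hr k ↦ ?_)
    (fun ξ hξ r hr ↦ ?_)).tsum_eq
  · have hone : 1 ≤ ‖(a + r * ξ) ^ (ρ : ℂ)‖ := by linarith [hlarge ξ hξ r hr, norm_nonneg z]
    rw [← inv_pow_cpow_succ, norm_mul, norm_inv, norm_pow, norm_pow, div_pow, ← div_eq_mul_inv]
    gcongr ‖z‖ ^ k / ?_
    calc (‖z‖ + 1) ^ k ≤ ‖(a + r * ξ) ^ (ρ : ℂ)‖ ^ k := by gcongr; exact hlarge ξ hξ r hr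
      _ ≤ ‖(a + r * ξ) ^ (ρ : ℂ)‖ ^ (k + 1) := pow_le_pow_right₀ hone k.le_succ
  · simp only [← inv_pow_cpow_succ]
    exact hasSum_pow_mul_inv_pow_succ ((lt_add_one _).trans_le (hlarge ξ hξ r hr))

theorem exists_mem_sector_neg_le_norm_ray (hκ0 : 0 ≤ κ) (hκ1 : κ < 1) (M : ℝ) :
    ∃ b ∈ sector (-κ), ∀ ξ ∈ sector κ, ∀ r : ℝ, 0 < r → M ≤ ‖b + r * ξ‖ := by
  have hκ : 0 < 1 - κ := by linarith
  set x := max M 1 * (1 + κ) / (1 - κ) with hx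
  have hx0 : 0 < x := by positivity
  refine ⟨x, ofReal_mem_sector (by linarith) hx0, fun ξ hξ r hr ↦ ?_⟩
  have h := le_norm_sub_of_mem_sector hκ0 (ofReal_mul_mem_sector hξ hr) (-x)
  rw [sub_neg_eq_add, add_comm (_ * _), norm_neg, Complex.norm_of_nonneg hx0.le, Complex.neg_re,
    Complex.ofReal_re] at h
  calc M ≤ max M 1 := le_max_left _ _
    _ = (- -x - κ * x) / (1 + κ) := by rw [hx]; field_simp
    _ ≤ _ := h

theorem mittagLeffler2_eq_hankelIntegral (hκ0 : 0 ≤ κ) (hκ1 : κ < 1) (ha : a ∈ sector (-κ))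
    (hζ : ζ ∈ sector κ) (hre : ζ.re < 0) (him : 0 < ζ.im) (hρ : ρ ∈ Ioc (0 : ℝ) 1)
    (hz : -z ∈ sector (-κ)) :
    mittagLeffler2 ρ z = hankelIntegral ζ a (fun s ↦ (s ^ (ρ : ℂ) - z)⁻¹) := by
  obtain ⟨b, hb, hlarge⟩ := exists_mem_sector_neg_le_norm_ray hκ0 hκ1 ((‖z‖ + 1) ^ ρ⁻¹)
  have hρ' : ρ ∈ Icc (0 : ℝ) 1 := Ioc_subset_Icc_self hρ
  rw [mittagLeffler2_eq_hankelIntegral_of_le_norm hκ0 hκ1 hb hζ hre him fun ξ hξ r hr ↦ ?_]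
  · refine hankelIntegral_eq_of_mem_sector hκ0 ?_
      (hasSubexpGrowth_of_norm_le fun s hs ↦
        norm_inv_sub_le_of_mem_sector hκ0 (cpow_mem_sector hs hρ') hz) hζ hre hb ha
    exact ((differentiableOn_cpow_sector hκ1.le ρ).sub_const z).inv fun s hs ↦
      sub_ne_zero_of_mem_sector hκ0 (cpow_mem_sector hs hρ') hz
  · rw [Complex.norm_cpow_real, ← Real.rpow_inv_le_iff_of_pos (by positivity) (norm_nonneg _) hρ.1]
    exact hlarge ξ hξ r hr

end MittagLeffler

section Expansion

/-- The Fourier symbol at time `t` of the solution of the scalar Riemann-Liouville equation of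
order `ρ` with symbol `lam`. -/
noncomputable def solutionSymbol (t : ℝ) (lam : ℂ) (ρ : ℝ) : ℂ :=
  ((t ^ (ρ - 1) : ℝ) : ℂ) * mittagLeffler2 ρ (lam * ((t ^ ρ : ℝ) : ℂ))

/-- The remainder of second order in the expansion
`lam ^ 2 * (u - lam)⁻¹ = -lam - u + u ^ 2 * (u - lam)⁻¹` at `u = v ^ ρ`. -/
noncomputable def resolventRemainder (lam : ℂ) (ρ : ℝ) (v : ℂ) : ℂ :=
  (v ^ (ρ : ℂ)) ^ 2 * (v ^ (ρ : ℂ) - lam)⁻¹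

/-- The leading term, as `t → ∞`, of `lam ^ 2 * (t * solutionSymbol t lam ρ)`. It equals
`-t ^ (-ρ) / Γ(-ρ)`, written so that `Γ` has no pole on `0 ≤ ρ ≤ 1`. -/
noncomputable def leadingTerm (t ρ : ℝ) : ℝ :=
  t ^ (-ρ) * (ρ / Real.Gamma (2 - ρ) * (1 - ρ))

variable {κ ρ t : ℝ} {a ζ lam : ℂ}

theorem inv_ofReal_mul_cpow (ht : 0 < t) {s : ℂ} (hs : s ≠ 0) (ρ : ℝ) :
    ((t⁻¹ : ℝ) * s) ^ (ρ : ℂ) = ((t ^ (-ρ) : ℝ) : ℂ) * s ^ (ρ : ℂ) := by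
  rw [ofReal_mul_cpow (inv_pos.2 ht) hs, ← Complex.ofReal_cpow (inv_pos.2 ht).le,
    Real.inv_rpow ht.le, Real.rpow_neg ht.le]

theorem neg_inv_Gamma_neg (w : ℂ) :
    -(Complex.Gamma (-w))⁻¹ = w * (1 - w) * (Complex.Gamma (2 - w))⁻¹ := by
  rw [Complex.one_div_Gamma_eq_self_mul_one_div_Gamma_add_one,
    Complex.one_div_Gamma_eq_self_mul_one_div_Gamma_add_one (-w + 1)]
  ring_nf

theorem ofReal_leadingTerm (t ρ : ℝ) :
    (leadingTerm t ρ : ℂ) = -(((t ^ (-ρ) : ℝ) : ℂ) * (Complex.Gamma (-ρ))⁻¹) := by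
  rw [leadingTerm, ← mul_neg, neg_inv_Gamma_neg, div_mul_eq_mul_div, div_eq_mul_inv]
  push_cast [← Complex.Gamma_ofReal]
  rfl

theorem mul_solutionSymbol_eq_hankelIntegral (hκ0 : 0 ≤ κ) (hκ1 : κ < 1) (ha : a ∈ sector (-κ))
    (hζ : ζ ∈ sector κ) (hre : ζ.re < 0) (him : 0 < ζ.im) (hlam : -lam ∈ sector (-κ))
    (ht : 0 < t) (hρ : ρ ∈ Ioc (0 : ℝ) 1) :
    t * solutionSymbol t lam ρ =
      hankelIntegral ζ a (fun s ↦ (((t⁻¹ : ℝ) * s) ^ (ρ : ℂ) - lam)⁻¹) := by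
  have htρ : 0 < t ^ ρ := Real.rpow_pos_of_pos ht ρ
  have hz : -(lam * ((t ^ ρ : ℝ) : ℂ)) ∈ sector (-κ) := by
    rw [mul_comm, ← mul_neg]
    exact ofReal_mul_mem_sector hlam htρ
  have hpow : (t : ℂ) * ((t ^ (ρ - 1) : ℝ) : ℂ) = ((t ^ ρ : ℝ) : ℂ) := by
    rw [← Complex.ofReal_mul, Real.rpow_sub_one ht.ne', mul_div_cancel₀ _ ht.ne']
  rw [solutionSymbol, ← mul_assoc, hpow,
    mittagLeffler2_eq_hankelIntegral hκ0 hκ1 ha hζ hre him hρ hz, ← hankelIntegral_const_mul]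
  refine hankelIntegral_congr hκ0 ha hζ fun s hs ↦ ?_
  have h : ((t ^ ρ : ℝ) : ℂ) ≠ 0 := Complex.ofReal_ne_zero.2 htρ.ne'
  calc ((t ^ ρ : ℝ) : ℂ) * (s ^ (ρ : ℂ) - lam * ((t ^ ρ : ℝ) : ℂ))⁻¹
      = (((t ^ ρ : ℝ) : ℂ)⁻¹ * (s ^ (ρ : ℂ) - lam * ((t ^ ρ : ℝ) : ℂ)))⁻¹ := by
        rw [mul_inv, inv_inv]
    _ = (((t⁻¹ : ℝ) * s) ^ (ρ : ℂ) - lam)⁻¹ := by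
        rw [inv_ofReal_mul_cpow ht (ne_zero_of_mem_sector hs), Real.rpow_neg ht.le,
          Complex.ofReal_inv, mul_sub, mul_comm lam, inv_mul_cancel_left₀ h]

theorem hankelIntegral_const_sub_mul_cpow (hκ0 : 0 ≤ κ) (hκ1 : κ < 1) (ha : a ∈ sector (-κ))
    (hζ : ζ ∈ sector κ) (hre : ζ.re < 0) (him : 0 < ζ.im) (b c w : ℂ) :
    hankelIntegral ζ a (fun s ↦ b - c * s ^ w) = -(c * (Complex.Gamma (-w))⁻¹) := by
  have hcont (b w : ℂ) : ContinuousOn (fun s ↦ b * s ^ w) (sector κ) :=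
    continuousOn_const.mul (differentiableOn_cpow_sector hκ1.le w).continuousOn
  have hb : (fun s : ℂ ↦ b - c * s ^ w) = fun s ↦ b * s ^ (-0 : ℂ) - c * s ^ (-(-w)) := by
    simp
  rw [hb, hankelIntegral_sub hκ0 (hcont _ _) ((hasSubexpGrowth_cpow _).const_mul b) (hcont _ _)
    ((hasSubexpGrowth_cpow _).const_mul c) ha hζ hre, hankelIntegral_const_mul,
    hankelIntegral_const_mul, hankelIntegral_cpow_neg hκ0 hκ1 ha hζ hre him,
    hankelIntegral_cpow_neg hκ0 hκ1 ha hζ hre him, Complex.Gamma_zero, inv_zero, mul_zero, zero_sub]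

theorem hasSubexpGrowth_scaled_resolvent (hκ : 0 ≤ κ) (hlam : -lam ∈ sector (-κ)) (ht : 0 < t)
    (hρ : ρ ∈ Icc (0 : ℝ) 1) :
    HasSubexpGrowth κ fun s ↦ (((t⁻¹ : ℝ) * s) ^ (ρ : ℂ) - lam)⁻¹ :=
  hasSubexpGrowth_of_norm_le fun _ hs ↦ norm_inv_sub_le_of_mem_sector hκ
    (cpow_mem_sector (ofReal_mul_mem_sector hs (inv_pos.2 ht)) hρ) hlam

theorem continuousOn_scaled_cpow (hκ : κ ≤ 1) (ht : 0 < t) (ρ : ℝ) :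
    ContinuousOn (fun s : ℂ ↦ ((t⁻¹ : ℝ) * s) ^ (ρ : ℂ)) (sector κ) :=
  (differentiableOn_cpow_sector hκ ρ).continuousOn.comp (by fun_prop)
    fun _ hs ↦ ofReal_mul_mem_sector hs (inv_pos.2 ht)

theorem continuousOn_scaled_resolvent (hκ0 : 0 ≤ κ) (hκ1 : κ ≤ 1) (hlam : -lam ∈ sector (-κ))
    (ht : 0 < t) (hρ : ρ ∈ Icc (0 : ℝ) 1) :
    ContinuousOn (fun s : ℂ ↦ (((t⁻¹ : ℝ) * s) ^ (ρ : ℂ) - lam)⁻¹) (sector κ) :=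
  ((continuousOn_scaled_cpow hκ1 ht ρ).sub continuousOn_const).inv₀ fun _ hs ↦
    sub_ne_zero_of_mem_sector hκ0 (cpow_mem_sector (ofReal_mul_mem_sector hs (inv_pos.2 ht)) hρ)
      hlam

theorem eqOn_resolventRemainder (hκ : 0 ≤ κ) (hlam : -lam ∈ sector (-κ)) (ht : 0 < t)
    (hρ : ρ ∈ Icc (0 : ℝ) 1) :
    EqOn (fun s : ℂ ↦ lam ^ 2 * (((t⁻¹ : ℝ) * s) ^ (ρ : ℂ) - lam)⁻¹ -
        (-lam - ((t ^ (-ρ) : ℝ) : ℂ) * s ^ (ρ : ℂ)))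
      (fun s ↦ resolventRemainder lam ρ ((t⁻¹ : ℝ) * s)) (sector κ) := by
  intro s hs
  have hne := sub_ne_zero_of_mem_sector hκ
    (cpow_mem_sector (ofReal_mul_mem_sector hs (inv_pos.2 ht)) hρ) hlam
  simp only [resolventRemainder]
  rw [← inv_ofReal_mul_cpow ht (ne_zero_of_mem_sector hs)]
  generalize ((t⁻¹ : ℝ) * s) ^ (ρ : ℂ) = u at hne ⊢
  field_simp
  ring

theorem continuousOn_resolventRemainder (hκ0 : 0 ≤ κ) (hκ1 : κ ≤ 1) (hlam : -lam ∈ sector (-κ))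
    (ht : 0 < t) (hρ : ρ ∈ Icc (0 : ℝ) 1) :
    ContinuousOn (fun s ↦ resolventRemainder lam ρ ((t⁻¹ : ℝ) * s)) (sector κ) :=
  ((continuousOn_scaled_cpow hκ1 ht ρ).pow 2).mul
    (continuousOn_scaled_resolvent hκ0 hκ1 hlam ht hρ)

theorem hasSubexpGrowth_const_sub_mul_cpow (b c w : ℂ) :
    HasSubexpGrowth κ fun s ↦ b - c * s ^ w := by
  have hconst : HasSubexpGrowth κ fun _ ↦ b := hasSubexpGrowth_of_norm_le fun _ _ ↦ le_rfl
  exact hconst.sub ((hasSubexpGrowth_cpow w).const_mul c)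

theorem hasSubexpGrowth_resolventRemainder (hκ : 0 ≤ κ) (hlam : -lam ∈ sector (-κ)) (ht : 0 < t)
    (hρ : ρ ∈ Icc (0 : ℝ) 1) :
    HasSubexpGrowth κ fun s ↦ resolventRemainder lam ρ ((t⁻¹ : ℝ) * s) :=
  (((hasSubexpGrowth_scaled_resolvent hκ hlam ht hρ).const_mul (lam ^ 2)).sub
    (hasSubexpGrowth_const_sub_mul_cpow _ _ _)).congr (eqOn_resolventRemainder hκ hlam ht hρ)

theorem sq_mul_solutionSymbol_eq (hκ0 : 0 ≤ κ) (hκ1 : κ < 1) (ha : a ∈ sector (-κ))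
    (hζ : ζ ∈ sector κ) (hre : ζ.re < 0) (him : 0 < ζ.im) (hlam : -lam ∈ sector (-κ))
    (ht : 0 < t) (hρ : ρ ∈ Ioc (0 : ℝ) 1) :
    lam ^ 2 * (t * solutionSymbol t lam ρ) =
      hankelIntegral ζ a (fun s ↦ resolventRemainder lam ρ ((t⁻¹ : ℝ) * s)) +
        leadingTerm t ρ := by
  have hρ' : ρ ∈ Icc (0 : ℝ) 1 := Ioc_subset_Icc_self hρ
  have hres : ContinuousOn (fun s : ℂ ↦ lam ^ 2 * (((t⁻¹ : ℝ) * s) ^ (ρ : ℂ) - lam)⁻¹)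
      (sector κ) :=
    continuousOn_const.mul (continuousOn_scaled_resolvent hκ0 hκ1.le hlam ht hρ')
  have hlin : ContinuousOn (fun s : ℂ ↦ -lam - ((t ^ (-ρ) : ℝ) : ℂ) * s ^ (ρ : ℂ)) (sector κ) :=
    continuousOn_const.sub
      (continuousOn_const.mul (differentiableOn_cpow_sector hκ1.le ρ).continuousOn)
  rw [← hankelIntegral_congr hκ0 ha hζ (eqOn_resolventRemainder hκ0 hlam ht hρ'),
    hankelIntegral_sub hκ0 hres
      ((hasSubexpGrowth_scaled_resolvent hκ0 hlam ht hρ').const_mul _) hlin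
      (hasSubexpGrowth_const_sub_mul_cpow _ _ _) ha hζ hre,
    hankelIntegral_const_mul, ← mul_solutionSymbol_eq_hankelIntegral hκ0 hκ1 ha hζ hre him hlam ht
      hρ, hankelIntegral_const_sub_mul_cpow hκ0 hκ1 ha hζ hre him, ← ofReal_leadingTerm,
    sub_add_cancel]

end Expansion

section Remainder

variable {κ ρ ρ₁ ρ₂ t : ℝ} {a ζ lam v : ℂ}

theorem hasDerivAt_resolventRemainder (hv : v ≠ 0) (hne : v ^ (ρ : ℂ) - lam ≠ 0) :
    HasDerivAt (fun ρ : ℝ ↦ resolventRemainder lam ρ v)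
      (Complex.log v * (v ^ (ρ : ℂ)) ^ 2 *
        ((v ^ (ρ : ℂ) - lam)⁻¹ - lam * ((v ^ (ρ : ℂ) - lam)⁻¹) ^ 2)) ρ := by
  have hpow : HasDerivAt (fun w : ℂ ↦ v ^ w) (v ^ (ρ : ℂ) * Complex.log v) ρ := by
    simpa using (hasDerivAt_id (ρ : ℂ)).const_cpow (.inl hv)
  convert! ((hpow.fun_pow 2).mul ((hpow.sub_const lam).fun_inv hne)).comp_ofReal using 1
  field_simp
  ring

theorem norm_deriv_resolventRemainder_le {q : ℝ} (hq : ‖(v ^ (ρ : ℂ) - lam)⁻¹‖ ≤ q) :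
    ‖Complex.log v * (v ^ (ρ : ℂ)) ^ 2 *
        ((v ^ (ρ : ℂ) - lam)⁻¹ - lam * ((v ^ (ρ : ℂ) - lam)⁻¹) ^ 2)‖ ≤
      ‖Complex.log v‖ * ‖v‖ ^ (2 * ρ) * (q + ‖lam‖ * q ^ 2) := by
  have hpow : ‖v ^ (ρ : ℂ)‖ ^ 2 = ‖v‖ ^ (2 * ρ) := by
    rw [Complex.norm_cpow_real, mul_comm 2 ρ, ← Real.rpow_mul_natCast (norm_nonneg v),
      Nat.cast_ofNat]
  rw [norm_mul, norm_mul, norm_pow, hpow]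
  gcongr
  refine (norm_sub_le _ _).trans ?_
  rw [norm_mul, norm_pow]
  gcongr

theorem exists_norm_resolventRemainder_sub_le (hκ : 0 ≤ κ) (hlam : -lam ∈ sector (-κ)) :
    ∃ C, 0 ≤ C ∧ ∀ v ∈ sector κ, ∀ ρ₁ ρ₂ L : ℝ, 0 ≤ ρ₁ → ρ₁ ≤ ρ₂ → ρ₂ ≤ 1 →
      (∀ ρ ∈ Icc ρ₁ ρ₂, ‖Complex.log v‖ * ‖v‖ ^ (2 * ρ) ≤ L) →
        ‖resolventRemainder lam ρ₂ v - resolventRemainder lam ρ₁ v‖ ≤ L * C * (ρ₂ - ρ₁) := by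
  set q := ((-lam.re - κ * ‖lam‖) / (1 + κ))⁻¹
  have hq : 0 < q := inv_pos.2 (sector_gap_pos hκ hlam)
  refine ⟨q + ‖lam‖ * q ^ 2, by positivity, fun v hv ρ₁ ρ₂ L h0 h12 h1 hL ↦ ?_⟩
  have hmem {ρ : ℝ} (hρ : ρ ∈ Icc ρ₁ ρ₂) : v ^ (ρ : ℂ) ∈ sector κ :=
    cpow_mem_sector hv ⟨h0.trans hρ.1, hρ.2.trans h1⟩
  rw [← Real.norm_of_nonneg (sub_nonneg.2 h12)]
  refine (convex_Icc ρ₁ ρ₂).norm_image_sub_le_of_norm_hasDerivWithin_le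
    (f := fun ρ : ℝ ↦ resolventRemainder lam ρ v)
    (fun ρ hρ ↦ (hasDerivAt_resolventRemainder (ne_zero_of_mem_sector hv)
      (sub_ne_zero_of_mem_sector hκ (hmem hρ) hlam)).hasDerivWithinAt)
    (fun ρ hρ ↦ ?_) (left_mem_Icc.2 h12) (right_mem_Icc.2 h12)
  refine (norm_deriv_resolventRemainder_le
    (norm_inv_sub_le_of_mem_sector hκ (hmem hρ) hlam)).trans ?_
  gcongr
  exact hL ρ hρ

theorem norm_log_le_norm_add_inv_norm (s : ℂ) :
    ‖Complex.log s‖ ≤ ‖s‖ + ‖s‖⁻¹ + Real.pi := by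
  have hlog : |Real.log ‖s‖| ≤ ‖s‖ + ‖s‖⁻¹ := by
    have h := Real.log_le_self (inv_nonneg.2 (norm_nonneg s))
    rw [Real.log_inv] at h
    exact abs_le.2 ⟨by linarith [norm_nonneg s],
      (Real.log_le_self (norm_nonneg s)).trans (by simp)⟩
  calc ‖Complex.log s‖ ≤ |(Complex.log s).re| + |(Complex.log s).im| :=
        Complex.norm_le_abs_re_add_abs_im _
    _ ≤ ‖s‖ + ‖s‖⁻¹ + Real.pi := by
        rw [Complex.log_re, Complex.log_im]
        exact add_le_add hlog (Complex.abs_arg_le_pi s)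

theorem norm_log_inv_ofReal_mul_le (ht : 1 ≤ t) {ε : ℝ} (hε : 0 < ε) {s : ℂ} (hs : ε ≤ ‖s‖) :
    ‖Complex.log ((t⁻¹ : ℝ) * s)‖ ≤ (1 + ε⁻¹ + Real.pi) * (1 + ‖s‖) * (1 + Real.log t) := by
  have hs0 : s ≠ 0 := norm_pos_iff.1 (hε.trans_le hs)
  have hlog : 0 ≤ Real.log t := Real.log_nonneg ht
  have hinv : ‖s‖⁻¹ ≤ ε⁻¹ := by gcongr
  have hM : 0 ≤ ε⁻¹ + Real.pi := by positivity
  rw [Complex.log_ofReal_mul (inv_pos.2 (by linarith)) hs0, Real.log_inv]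
  calc ‖((-Real.log t : ℝ) : ℂ) + Complex.log s‖
      ≤ Real.log t + (‖s‖ + ε⁻¹ + Real.pi) := by
        refine (norm_add_le _ _).trans (add_le_add ?_ ?_)
        · rw [Complex.norm_real, norm_neg, Real.norm_of_nonneg hlog]
        · linarith [norm_log_le_norm_add_inv_norm s]
    _ ≤ (1 + ε⁻¹ + Real.pi) * (1 + ‖s‖) + (1 + ε⁻¹ + Real.pi) * (1 + ‖s‖) * Real.log t := by
        nlinarith [norm_nonneg s, mul_nonneg hM (norm_nonneg s), mul_nonneg hM hlog,
          mul_nonneg (norm_nonneg s) hlog, mul_nonneg (mul_nonneg hM (norm_nonneg s)) hlog]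
    _ = _ := by ring

theorem norm_inv_ofReal_mul_rpow_le (ht : 1 ≤ t) (h0 : 0 ≤ ρ₁) (h1 : ρ ∈ Icc ρ₁ 1) (s : ℂ) :
    ‖(t⁻¹ : ℝ) * s‖ ^ (2 * ρ) ≤ t ^ (-2 * ρ₁) * (1 + ‖s‖) ^ 2 := by
  have ht0 : 0 ≤ t := by linarith
  have h0ρ : 0 ≤ ρ := h0.trans h1.1
  rw [norm_mul, Complex.norm_of_nonneg (inv_nonneg.2 ht0), Real.mul_rpow (inv_nonneg.2 ht0)
    (norm_nonneg s), Real.inv_rpow ht0, ← Real.rpow_neg ht0]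
  gcongr
  · linarith [h1.1]
  · calc ‖s‖ ^ (2 * ρ) ≤ (1 + ‖s‖) ^ (2 * ρ) := by gcongr; linarith
      _ ≤ (1 + ‖s‖) ^ (2 : ℝ) :=
        Real.rpow_le_rpow_of_exponent_le (by linarith [norm_nonneg s]) (by linarith [h1.2])
      _ = (1 + ‖s‖) ^ 2 := Real.rpow_ofNat _ 2

theorem exists_norm_log_mul_rpow_le_exp {ε : ℝ} (hε : 0 < ε) :
    ∃ C, 0 ≤ C ∧ ∀ s : ℂ, ε ≤ ‖s‖ → ∀ t ≥ (1 : ℝ), ∀ ρ₁ ≥ (0 : ℝ), ∀ ρ ∈ Icc ρ₁ 1,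
      ‖Complex.log ((t⁻¹ : ℝ) * s)‖ * ‖(t⁻¹ : ℝ) * s‖ ^ (2 * ρ) ≤
        C * (t ^ (-2 * ρ₁) * (1 + Real.log t)) * Real.exp (ε * ‖s‖) := by
  set c := 1 + ε⁻¹ + Real.pi
  refine ⟨c * (Nat.factorial 3 / ε ^ 3 * Real.exp ε), by positivity,
    fun s hs t ht ρ₁ h0 ρ hρ ↦ ?_⟩
  have hlog : 0 ≤ Real.log t := Real.log_nonneg ht
  calc ‖Complex.log ((t⁻¹ : ℝ) * s)‖ * ‖(t⁻¹ : ℝ) * s‖ ^ (2 * ρ)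
      ≤ c * (1 + ‖s‖) * (1 + Real.log t) * (t ^ (-2 * ρ₁) * (1 + ‖s‖) ^ 2) := by
        gcongr
        exacts [norm_log_inv_ofReal_mul_le ht hε hs, norm_inv_ofReal_mul_rpow_le ht h0 hρ s]
    _ = c * (t ^ (-2 * ρ₁) * (1 + Real.log t)) * (1 + ‖s‖) ^ 3 := by ring
    _ ≤ c * (t ^ (-2 * ρ₁) * (1 + Real.log t)) *
          (Nat.factorial 3 / ε ^ 3 * Real.exp ε * Real.exp (ε * ‖s‖)) := by
        gcongr
        exact one_add_pow_le_exp hε (norm_nonneg s) 3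
    _ = _ := by ring

theorem exists_norm_hankelIntegral_resolventRemainder_sub_le (hκ0 : 0 ≤ κ) (hκ1 : κ ≤ 1)
    (ha : a ∈ sector (-κ)) (hζ : ζ ∈ sector κ) (hre : ζ.re < 0) (hlam : -lam ∈ sector (-κ)) :
    ∃ C, 0 ≤ C ∧ ∀ t ≥ (1 : ℝ), ∀ ρ₁ ρ₂ : ℝ, 0 ≤ ρ₁ → ρ₁ ≤ ρ₂ → ρ₂ ≤ 1 →
      ‖hankelIntegral ζ a (fun s ↦ resolventRemainder lam ρ₂ ((t⁻¹ : ℝ) * s)) -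
          hankelIntegral ζ a (fun s ↦ resolventRemainder lam ρ₁ ((t⁻¹ : ℝ) * s))‖ ≤
        C * (t ^ (-2 * ρ₁) * (1 + Real.log t)) * (ρ₂ - ρ₁) := by
  obtain ⟨A, hA, ε, hε, hhankel⟩ := exists_norm_hankelIntegral_le hκ0 ha hζ hre
  obtain ⟨B, hB, hlip⟩ := exists_norm_resolventRemainder_sub_le hκ0 hlam
  obtain ⟨C, hC, hweight⟩ := exists_norm_log_mul_rpow_le_exp hε
  refine ⟨A * B * C, by positivity, fun t ht ρ₁ ρ₂ h0 h12 h1 ↦ ?_⟩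
  have ht0 : 0 < t := by linarith
  have hρ₁ : ρ₁ ∈ Icc (0 : ℝ) 1 := ⟨h0, h12.trans h1⟩
  have hρ₂ : ρ₂ ∈ Icc (0 : ℝ) 1 := ⟨h0.trans h12, h1⟩
  rw [← hankelIntegral_sub hκ0 (continuousOn_resolventRemainder hκ0 hκ1 hlam ht0 hρ₂)
    (hasSubexpGrowth_resolventRemainder hκ0 hlam ht0 hρ₂)
    (continuousOn_resolventRemainder hκ0 hκ1 hlam ht0 hρ₁)
    (hasSubexpGrowth_resolventRemainder hκ0 hlam ht0 hρ₁) ha hζ hre]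
  refine (hhankel _ (C * (t ^ (-2 * ρ₁) * (1 + Real.log t)) * B * (ρ₂ - ρ₁))
    fun s hs hεs ↦ ?_).trans_eq (by ring)
  exact (hlip _ (ofReal_mul_mem_sector hs (inv_pos.2 ht0)) ρ₁ ρ₂ _ h0 h12 h1 fun ρ hρ ↦
    hweight s hεs t ht ρ₁ h0 ρ ⟨hρ.1, hρ.2.trans h1⟩).trans_eq (by ring)

theorem exists_solutionSymbol_expansion (hlam : lam.re < 0) :
    ∃ C, 0 ≤ C ∧ ∀ t ≥ (1 : ℝ), ∃ R : ℝ → ℂ,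
      (∀ ρ ∈ Ioc (0 : ℝ) 1, lam ^ 2 * (t * solutionSymbol t lam ρ) =
        R ρ + leadingTerm t ρ) ∧
      ∀ ρ₁ ρ₂ : ℝ, 0 ≤ ρ₁ → ρ₁ ≤ ρ₂ → ρ₂ ≤ 1 →
        ‖R ρ₂ - R ρ₁‖ ≤ C * (t ^ (-2 * ρ₁) * (1 + Real.log t)) * (ρ₂ - ρ₁) := by
  have hnorm : 0 < ‖lam‖ := norm_pos_iff.2 fun h ↦ by simp [h] at hlam
  set κ := -lam.re / (2 * ‖lam‖) with hκ
  have hκ0 : 0 < κ := by have := neg_pos.2 hlam; positivity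
  have hκlam : κ * ‖lam‖ = -lam.re / 2 := by rw [hκ]; field_simp
  have hκ1 : κ < 1 := by
    rw [hκ, div_lt_one (by positivity)]
    linarith [neg_le_abs lam.re, Complex.abs_re_le_norm lam]
  have hlamκ : -lam ∈ sector (-κ) := by
    rw [mem_sector, neg_neg, norm_neg, hκlam, Complex.neg_re]
    linarith
  set ζ : ℂ := ⟨-κ / 2, 1⟩
  have hζ : ζ ∈ sector κ := by
    have hone : 1 ≤ ‖ζ‖ := by simpa [ζ] using Complex.abs_im_le_norm ζ
    change -κ * ‖ζ‖ < -κ / 2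
    nlinarith
  have hre : ζ.re < 0 := by simp only [ζ]; linarith
  have ha : (1 : ℂ) ∈ sector (-κ) := by simpa [sector] using hκ1
  obtain ⟨C, hC, hlip⟩ :=
    exists_norm_hankelIntegral_resolventRemainder_sub_le hκ0.le hκ1.le ha hζ hre hlamκ
  exact ⟨C, hC, fun t ht ↦ ⟨_, fun ρ hρ ↦ sq_mul_solutionSymbol_eq hκ0.le hκ1 ha hζ hre one_pos
    hlamκ (by linarith) hρ, hlip t ht⟩⟩

end Remainder

section LeadingTerm

theorem contDiff_div_Gamma_two_sub : ContDiff ℝ 1 fun ρ : ℝ ↦ ρ / Real.Gamma (2 - ρ) := by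
  have hentire : Differentiable ℂ fun z : ℂ ↦ z * (Complex.Gamma (2 - z))⁻¹ :=
    differentiable_id.mul
      (Complex.differentiable_one_div_Gamma.comp ((differentiable_const 2).sub differentiable_id))
  have hreal : ContDiff ℝ 1 fun ρ : ℝ ↦ ((ρ : ℂ) * (Complex.Gamma (2 - ρ))⁻¹).re :=
    Complex.reCLM.contDiff.comp
      ((hentire.contDiff.restrict_scalars ℝ).comp Complex.ofRealCLM.contDiff)
  convert hreal using 2 with ρ
  have hcast : (2 - ρ : ℂ) = ((2 - ρ : ℝ) : ℂ) := by push_cast; rfl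
  rw [hcast, Complex.Gamma_ofReal, ← Complex.ofReal_inv, ← Complex.ofReal_mul, Complex.ofReal_re,
    div_eq_mul_inv]

theorem exists_pos_forall_le_div_Gamma_two_sub {β₀ : ℝ} (hβ₀ : 0 < β₀) :
    ∃ c, 0 < c ∧ ∀ ρ ∈ Icc β₀ 1, c ≤ ρ / Real.Gamma (2 - ρ) :=
  isCompact_Icc.exists_forall_le' contDiff_div_Gamma_two_sub.continuous.continuousOn fun _ hρ ↦
    div_pos (hβ₀.trans_le hρ.1) (Real.Gamma_pos_of_pos (by linarith [hρ.2]))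

theorem exists_forall_div_Gamma_two_sub_le (β₀ : ℝ) :
    ∃ L : ℝ, ∀ ρ₁ ∈ Icc β₀ 1, ∀ ρ₂ ∈ Icc β₀ 1, ρ₁ ≤ ρ₂ →
      ρ₂ / Real.Gamma (2 - ρ₂) ≤ ρ₁ / Real.Gamma (2 - ρ₁) + L * (ρ₂ - ρ₁) := by
  obtain ⟨L, hL⟩ := contDiff_div_Gamma_two_sub.contDiffOn.exists_lipschitzOnWith one_ne_zero
    (convex_Icc β₀ 1) isCompact_Icc
  refine ⟨L, fun ρ₁ hρ₁ ρ₂ hρ₂ h12 ↦ ?_⟩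
  have hdist := hL.le_add_mul hρ₂ hρ₁
  rwa [Real.dist_eq, abs_of_nonneg (sub_nonneg.2 h12)] at hdist

theorem one_add_log_mul_le_rpow {t : ℝ} (ht : 0 < t) (x : ℝ) : 1 + Real.log t * x ≤ t ^ x := by
  rw [Real.rpow_def_of_pos ht, add_comm]
  exact Real.add_one_le_exp _

theorem mul_rpow_neg_mul_sub_le {t a b c L ρ₁ ρ₂ : ℝ} (ht : 1 ≤ t) (hc : 0 ≤ c) (hca : c ≤ a)
    (hba : b ≤ a + L * (ρ₂ - ρ₁)) (hL : L ≤ Real.log t * c) (h12 : ρ₁ ≤ ρ₂) (h2 : ρ₂ ≤ 1) :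
    c * t ^ (-ρ₁) * (ρ₂ - ρ₁) ≤ t ^ (-ρ₁) * (a * (1 - ρ₁)) - t ^ (-ρ₂) * (b * (1 - ρ₂)) := by
  have ht0 : 0 < t := by linarith
  have hLa : L ≤ Real.log t * a :=
    hL.trans (mul_le_mul_of_nonneg_left hca (Real.log_nonneg ht))
  have hba' : b ≤ t ^ (ρ₂ - ρ₁) * a :=
    calc b ≤ a + L * (ρ₂ - ρ₁) := hba
      _ ≤ a + Real.log t * a * (ρ₂ - ρ₁) := by gcongr
      _ = (1 + Real.log t * (ρ₂ - ρ₁)) * a := by ring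
      _ ≤ t ^ (ρ₂ - ρ₁) * a :=
        mul_le_mul_of_nonneg_right (one_add_log_mul_le_rpow ht0 _) (hc.trans hca)
  have hdecr : t ^ (-ρ₂) * b ≤ t ^ (-ρ₁) * a :=
    calc t ^ (-ρ₂) * b ≤ t ^ (-ρ₂) * (t ^ (ρ₂ - ρ₁) * a) := by gcongr
      _ = t ^ (-ρ₁) * a := by rw [← mul_assoc, ← Real.rpow_add ht0]; ring_nf
  calc c * t ^ (-ρ₁) * (ρ₂ - ρ₁) ≤ a * t ^ (-ρ₁) * (ρ₂ - ρ₁) := by gcongr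
    _ = t ^ (-ρ₁) * (a * (1 - ρ₁)) - t ^ (-ρ₁) * a * (1 - ρ₂) := by ring
    _ ≤ t ^ (-ρ₁) * (a * (1 - ρ₁)) - t ^ (-ρ₂) * b * (1 - ρ₂) :=
      sub_le_sub_left (mul_le_mul_of_nonneg_right hdecr (sub_nonneg.2 h2)) _
    _ = t ^ (-ρ₁) * (a * (1 - ρ₁)) - t ^ (-ρ₂) * (b * (1 - ρ₂)) := by ring

theorem exists_pos_eventually_le_leadingTerm_sub {β₀ : ℝ} (hβ₀ : 0 < β₀) :
    ∃ c : ℝ, 0 < c ∧ ∀ᶠ t : ℝ in atTop, ∀ ρ₁ ∈ Icc β₀ 1, ∀ ρ₂ ∈ Icc β₀ 1, ρ₁ ≤ ρ₂ →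
      c * t ^ (-ρ₁) * (ρ₂ - ρ₁) ≤ leadingTerm t ρ₁ - leadingTerm t ρ₂ := by
  obtain ⟨c, hc, hlow⟩ := exists_pos_forall_le_div_Gamma_two_sub hβ₀
  obtain ⟨L, hlip⟩ := exists_forall_div_Gamma_two_sub_le β₀
  refine ⟨c, hc, ?_⟩
  filter_upwards [eventually_ge_atTop 1, Real.tendsto_log_atTop.eventually_ge_atTop (L / c)]
    with t ht hlog ρ₁ hρ₁ ρ₂ hρ₂ h12
  exact mul_rpow_neg_mul_sub_le ht hc.le (hlow ρ₁ hρ₁) (hlip ρ₁ hρ₁ ρ₂ hρ₂ h12)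
    ((div_le_iff₀ hc).1 hlog) h12 hρ₂.2

end LeadingTerm

section Injectivity

theorem tendsto_rpow_neg_mul_one_add_log {β : ℝ} (hβ : 0 < β) :
    Tendsto (fun t : ℝ ↦ t ^ (-β) * (1 + Real.log t)) atTop (𝓝 0) := by
  have hsum := (tendsto_rpow_neg_atTop hβ).add (isLittleO_log_rpow_atTop hβ).tendsto_div_nhds_zero
  rw [add_zero] at hsum
  refine hsum.congr' ?_
  filter_upwards [eventually_gt_atTop 0] with t ht
  rw [Real.rpow_neg ht.le]
  ring

theorem eventually_forall_mul_rpow_neg_two_mul_lt {β₀ c : ℝ} (hβ₀ : 0 < β₀) (hc : 0 < c) {C : ℝ}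
    (hC : 0 ≤ C) :
    ∀ᶠ t : ℝ in atTop, ∀ ρ ≥ β₀, C * (t ^ (-2 * ρ) * (1 + Real.log t)) < c * t ^ (-ρ) := by
  have hsmall : ∀ᶠ t : ℝ in atTop, C * (t ^ (-β₀) * (1 + Real.log t)) < c := by
    have hlim := (tendsto_rpow_neg_mul_one_add_log hβ₀).const_mul C
    rw [mul_zero] at hlim
    exact hlim.eventually_lt_const hc
  filter_upwards [hsmall, eventually_ge_atTop 1] with t hsmall ht ρ hρ
  have ht0 : 0 < t := by linarith
  have hlog : 0 ≤ 1 + Real.log t := by linarith [Real.log_nonneg ht]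
  calc C * (t ^ (-2 * ρ) * (1 + Real.log t))
      = C * (t ^ (-ρ) * (1 + Real.log t)) * t ^ (-ρ) := by
        rw [show -2 * ρ = -ρ + -ρ by ring, Real.rpow_add ht0]
        ring
    _ ≤ C * (t ^ (-β₀) * (1 + Real.log t)) * t ^ (-ρ) := by gcongr
    _ < c * t ^ (-ρ) := by gcongr

theorem injOn_add_ofReal_of_norm_sub_lt {α : Type*} [LinearOrder α] {s : Set α} {f : α → ℂ}
    {g : α → ℝ} (h : ∀ x ∈ s, ∀ y ∈ s, x < y → ‖f y - f x‖ < g x - g y) :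
    InjOn (fun x ↦ f x + (g x : ℂ)) s := by
  have hne : ∀ x ∈ s, ∀ y ∈ s, x < y → f x + (g x : ℂ) ≠ f y + (g y : ℂ) := by
    intro x hx y hy hxy heq
    have hsub : ((g x - g y : ℝ) : ℂ) = f y - f x := by
      push_cast
      linear_combination heq
    refine (h x hx y hy hxy).not_ge ?_
    rw [← hsub, Complex.norm_real]
    exact Real.le_norm_self _
  intro x hx y hy heq
  by_contra hxy
  rcases lt_or_gt_of_ne hxy with hlt | hgt
  · exact hne x hx y hy hlt heq
  · exact hne y hy x hx hgt heq.symm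

theorem eventually_injOn_solutionSymbol {lam : ℂ} (hlam : lam.re < 0) {β₀ : ℝ} (hβ₀ : 0 < β₀) :
    ∀ᶠ t : ℝ in atTop, InjOn (solutionSymbol t lam) (Icc β₀ 1) := by
  obtain ⟨C, hC, hexpansion⟩ := exists_solutionSymbol_expansion hlam
  obtain ⟨c, hc, hleading⟩ := exists_pos_eventually_le_leadingTerm_sub hβ₀
  filter_upwards [hleading, eventually_forall_mul_rpow_neg_two_mul_lt hβ₀ hc hC,
    eventually_ge_atTop 1] with t hleading hsmall ht
  obtain ⟨R, hR, hRlip⟩ := hexpansion t ht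
  have hinj : InjOn (fun ρ ↦ R ρ + (leadingTerm t ρ : ℂ)) (Icc β₀ 1) :=
    injOn_add_ofReal_of_norm_sub_lt fun ρ₁ hρ₁ ρ₂ hρ₂ h12 ↦
    calc ‖R ρ₂ - R ρ₁‖ ≤ C * (t ^ (-2 * ρ₁) * (1 + Real.log t)) * (ρ₂ - ρ₁) :=
          hRlip ρ₁ ρ₂ (hβ₀.le.trans hρ₁.1) h12.le hρ₂.2
      _ < c * t ^ (-ρ₁) * (ρ₂ - ρ₁) :=
          mul_lt_mul_of_pos_right (hsmall ρ₁ hρ₁.1) (sub_pos.2 h12)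
      _ ≤ leadingTerm t ρ₁ - leadingTerm t ρ₂ := hleading ρ₁ hρ₁ ρ₂ hρ₂ h12.le
  have hscaled : InjOn (fun ρ ↦ lam ^ 2 * (t * solutionSymbol t lam ρ)) (Icc β₀ 1) :=
    hinj.congr fun ρ hρ ↦ (hR ρ ⟨hβ₀.trans_le hρ.1, hρ.2⟩).symm
  exact fun ρ₁ hρ₁ ρ₂ hρ₂ heq ↦ hscaled hρ₁ hρ₂ (by simp only [heq])

end Injectivity

section InverseProblem

variable {ι R : Type*} [Fintype ι] [DecidableEq ι] [CommRing R]

theorem mulVec_eq_iff_eq_inv_mulVec {K : Matrix ι ι R} (hK : IsUnit K) {v d : ι → R} :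
    K.mulVec v = d ↔ v = K⁻¹.mulVec d := by
  have hdet : IsUnit K.det := (Matrix.isUnit_iff_isUnit_det K).1 hK
  constructor
  · rintro rfl
    rw [Matrix.mulVec_mulVec, Matrix.nonsing_inv_mul _ hdet, Matrix.one_mulVec]
  · rintro rfl
    rw [Matrix.mulVec_mulVec, Matrix.mul_nonsing_inv _ hdet, Matrix.one_mulVec]

theorem existsUnique_forall_sum_mul_eq {α : Type*} {K : Matrix ι ι R} (hK : IsUnit K)
    {s : Set α} {f : ι → α → R} (hf : ∀ l, InjOn (f l) s) {d : ι → R}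
    (hd : ∀ l, K⁻¹.mulVec d l ∈ f l '' s) :
    ∃! B : ι → α, (∀ l, B l ∈ s) ∧ ∀ j, ∑ l, K j l * f l (B l) = d j := by
  have hiff (B : ι → α) :
      (∀ j, ∑ l, K j l * f l (B l) = d j) ↔ ∀ l, f l (B l) = K⁻¹.mulVec d l :=
    funext_iff.symm.trans ((mulVec_eq_iff_eq_inv_mulVec hK).trans funext_iff)
  simp only [hiff]
  choose B hB hBd using hd
  exact ⟨B, ⟨hB, hBd⟩, fun B' ⟨hB', hBd'⟩ ↦ funext fun l ↦
    hf l (hB' l) (hB l) ((hBd' l).trans (hBd l).symm)⟩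

theorem riemann_liouville_inverse_problem_general (K : Matrix ι ι ℂ) (hK : IsUnit K)
    (lam : ι → ℂ) (hlam : ∀ l, (lam l).re < 0) (β₀ : ℝ) (hβ₀ : 0 < β₀) :
    ∃ T₁ : ℝ, 1 < T₁ ∧ ∀ t₀ : ℝ, T₁ ≤ t₀ → ∀ d : ι → ℂ,
      (∀ l, K⁻¹.mulVec d l ∈ solutionSymbol t₀ (lam l) '' Icc β₀ 1) →
      ∃! B : ι → ℝ, (∀ l, B l ∈ Icc β₀ 1) ∧
        ∀ j, ∑ l, K j l * solutionSymbol t₀ (lam l) (B l) = d j := by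
  obtain ⟨T, hT⟩ := eventually_atTop.1 <|
    eventually_all.2 fun l ↦ eventually_injOn_solutionSymbol (hlam l) hβ₀
  exact ⟨max T 2, lt_max_of_lt_right one_lt_two, fun t₀ ht₀ d hd ↦
    existsUnique_forall_sum_mul_eq hK (hT t₀ (le_of_max_le_left ht₀)) hd⟩

end InverseProblem

/-- **Theorem (Riemann-Liouville case, reduced inverse problem).** Let `K` be an
invertible `m × m` complex matrix, `Re λ_l < 0` and `|Re λ_l| ≠ |Im λ_l|` for all
`l`, and `0 < β₀ < 1`. Then there is `T₁ > 1` such that for every `t₀ ≥ T₁` and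
every data vector `d` whose transformed components `(K⁻¹ d)_l` lie in the range of
`ρ ↦ t₀^{ρ−1} E_{ρ,ρ}(λ_l t₀^ρ)` over `[β₀, 1)`, there is a unique vector-order
`B ∈ [β₀, 1]^m` with `∑_l K_{j,l} t₀^{B_l−1} E_{B_l,B_l}(λ_l t₀^{B_l}) = d_j`
for all `j`. -/
theorem riemann_liouville_inverse_problem (m : ℕ) (hm : 1 ≤ m)
    (K : Matrix (Fin m) (Fin m) ℂ) (hK : IsUnit K)
    (lam : Fin m → ℂ) (hlam : ∀ l, (lam l).re < 0)
    (hlam' : ∀ l, |(lam l).re| ≠ |(lam l).im|)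
    (β₀ : ℝ) (hβ₀ : 0 < β₀) (hβ₀1 : β₀ < 1) :
    ∃ T₁ : ℝ, 1 < T₁ ∧ ∀ t₀ : ℝ, T₁ ≤ t₀ →
      ∀ d : Fin m → ℂ,
        (∀ l, K⁻¹.mulVec d l ∈
          (fun ρ : ℝ => ((t₀ ^ (ρ - 1) : ℝ) : ℂ) *
            mittagLeffler2 ρ (lam l * ((t₀ ^ ρ : ℝ) : ℂ))) '' Set.Ico β₀ 1) →
        ∃! B : Fin m → ℝ, (∀ l, B l ∈ Set.Icc β₀ 1) ∧
          ∀ j, ∑ l, K j l * ((t₀ ^ (B l - 1) : ℝ) : ℂ) *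
            mittagLeffler2 (B l) (lam l * ((t₀ ^ (B l) : ℝ) : ℂ)) = d j := by
  obtain ⟨T₁, hT₁, hsolve⟩ := riemann_liouville_inverse_problem_general K hK lam hlam β₀ hβ₀
  refine ⟨T₁, hT₁, fun t₀ ht₀ d hd ↦ ?_⟩
  simpa only [solutionSymbol, mul_assoc] using
    hsolve t₀ ht₀ d fun l ↦ image_mono Ico_subset_Icc_self (hd l)
end
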